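/- arXiv:1707.08199 — 8 statements merged into one kernel-verified Lean document; each statement's English description precedes it below -/
import Mathlib

section
/- For every α > 0 and every A ∈ [0, |Ω|], Λ(α,A) = inf_η inf_u (∫_Ω (Δu)² + α ∫_Ω η u²) / ∫_Ω u², where η ranges over all measurable functions η : Ω → [0,1] with ∫_Ω η = A and u ranges over smooth compactly supported functions u : Ω → ℝ with u ≢ 0. -/
open MeasureTheory ENNReal

noncomputable section

/-- The Euclidean Laplacian `Δu` of a function `u : ℝⁿ → ℝ`. -/
def lap {n : ℕ} (u : EuclideanSpace ℝ (Fin n) → ℝ) (x : EuclideanSpace ℝ (Fin n)) : ℝ :=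
  ∑ i : Fin n, iteratedFDeriv ℝ 2 u x ![EuclideanSpace.single i 1, EuclideanSpace.single i 1]

/-- Smooth compactly supported test functions on `Ω`, not identically zero. -/
def TestFun {n : ℕ} (Ω : Set (EuclideanSpace ℝ (Fin n)))
    (u : EuclideanSpace ℝ (Fin n) → ℝ) : Prop :=
  ContDiff ℝ (⊤ : ℕ∞) u ∧ HasCompactSupport u ∧ tsupport u ⊆ Ω ∧ u ≠ 0

/-- The generalized composite plate eigenvalue
`Λ(α,A) = inf_S inf_u (∫_Ω (Δu)² + α ∫_S u²) / ∫_Ω u²`,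
the infima being over measurable `S ⊆ Ω` with `|S| = A` and over smooth compactly
supported `u : Ω → ℝ`, `u ≢ 0`. -/
def Lam {n : ℕ} (Ω : Set (EuclideanSpace ℝ (Fin n))) (α A : ℝ) : ℝ :=
  sInf { r : ℝ | ∃ S : Set (EuclideanSpace ℝ (Fin n)), MeasurableSet S ∧ S ⊆ Ω ∧
      volume S = ENNReal.ofReal A ∧
      ∃ u : EuclideanSpace ℝ (Fin n) → ℝ, TestFun Ω u ∧
        r = ((∫ x in Ω, lap u x ^ 2) + α * ∫ x in S, u x ^ 2) / ∫ x in Ω, u x ^ 2 }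

/-- Existence of a quantile level of a nonnegative function. -/
theorem exists_level {X : Type*} [MeasurableSpace X] (μ : Measure X) [IsFiniteMeasure μ]
    (f : X → ℝ) (hf : Measurable f) (hf0 : ∀ x, 0 ≤ f x) (a : ℝ≥0∞) (ha : 0 < a)
    (M : ℝ) (hM : a ≤ μ {x | f x ≤ M}) :
    ∃ t : ℝ, μ {x | f x < t} ≤ a ∧ a ≤ μ {x | f x ≤ t} := by
  set T : Set ℝ := {s | a ≤ μ {x | f x ≤ s}} with hT
  have hTne : T.Nonempty := ⟨M, hM⟩
  have hTb : BddBelow T := by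
    refine ⟨0, fun s hs => ?_⟩
    by_contra h
    push Not at h
    have he : {x | f x ≤ s} = ∅ := by
      ext x
      simp only [Set.mem_ofPred_eq, Set.mem_empty_iff_false, iff_false, not_le]
      exact lt_of_lt_of_le h (hf0 x)
    have hs' : a ≤ μ {x | f x ≤ s} := hs
    rw [he, measure_empty] at hs'
    exact absurd hs' (not_le.mpr ha)
  refine ⟨sInf T, ?_, ?_⟩
  · have hU : {x | f x < sInf T} = ⋃ k : ℕ, {x | f x ≤ sInf T - 1 / ((k : ℝ) + 1)} := by
      ext x
      simp only [Set.mem_ofPred_eq, Set.mem_iUnion]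
      constructor
      · intro h
        obtain ⟨k, hk⟩ := exists_nat_one_div_lt (sub_pos.mpr h)
        exact ⟨k, by linarith⟩
      · rintro ⟨k, hk⟩
        have : (0 : ℝ) < 1 / ((k : ℝ) + 1) := by positivity
        linarith
    have hmono : Monotone fun k : ℕ => {x | f x ≤ sInf T - 1 / ((k : ℝ) + 1)} := by
      intro k l hkl x hx
      have h1 : (1 : ℝ) / ((l : ℝ) + 1) ≤ 1 / ((k : ℝ) + 1) := Nat.one_div_le_one_div hkl
      simp only [Set.mem_ofPred_eq] at hx ⊢
      linarith
    rw [hU, hmono.measure_iUnion]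
    refine iSup_le fun k => ?_
    by_contra h
    push Not at h
    have : sInf T ≤ sInf T - 1 / ((k : ℝ) + 1) := csInf_le hTb (le_of_lt h)
    have : (0 : ℝ) < 1 / ((k : ℝ) + 1) := by positivity
    linarith
  · have hI : {x | f x ≤ sInf T} = ⋂ k : ℕ, {x | f x ≤ sInf T + 1 / ((k : ℝ) + 1)} := by
      ext x
      simp only [Set.mem_ofPred_eq, Set.mem_iInter]
      constructor
      · intro h k
        have : (0 : ℝ) < 1 / ((k : ℝ) + 1) := by positivity
        linarith
      · intro h
        by_contra h'
        push Not at h'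
        obtain ⟨k, hk⟩ := exists_nat_one_div_lt (sub_pos.mpr h')
        have := h k
        linarith
    have hanti : Antitone fun k : ℕ => {x | f x ≤ sInf T + 1 / ((k : ℝ) + 1)} := by
      intro k l hkl x hx
      have h1 : (1 : ℝ) / ((l : ℝ) + 1) ≤ 1 / ((k : ℝ) + 1) := Nat.one_div_le_one_div hkl
      simp only [Set.mem_ofPred_eq] at hx ⊢
      linarith
    have hlim := tendsto_measure_iInter_atTop (μ := μ)
      (fun k : ℕ => (measurableSet_le hf measurable_const :
        MeasurableSet {x | f x ≤ sInf T + 1 / ((k : ℝ) + 1)}).nullMeasurableSet) hanti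
      ⟨0, measure_ne_top _ _⟩
    rw [hI]
    refine ge_of_tendsto' hlim fun k => ?_
    have hpos : (0 : ℝ) < 1 / ((k : ℝ) + 1) := by positivity
    obtain ⟨s, hs, hs'⟩ := exists_lt_of_csInf_lt hTne (lt_add_of_pos_right (sInf T) hpos)
    exact le_trans hs (measure_mono fun x hx => le_trans hx hs'.le)

/-- Bathtub principle: existence of an optimal set. -/
theorem bathtub {n : ℕ} (hn : 2 ≤ n) (Ω : Set (EuclideanSpace ℝ (Fin n)))
    (hΩ : MeasurableSet Ω) (hΩb : Bornology.IsBounded Ω)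
    (f : EuclideanSpace ℝ (Fin n) → ℝ) (hf : Measurable f) (hf0 : ∀ x, 0 ≤ f x)
    (M : ℝ) (hM : ∀ x, f x ≤ M) (a : ℝ≥0∞) (ha : a ≤ volume Ω) :
    ∃ S t, MeasurableSet S ∧ S ⊆ Ω ∧ volume S = a ∧
      (∀ x ∈ S, f x ≤ t) ∧ (∀ x ∈ Ω, x ∉ S → t ≤ f x) := by
  have hfin : volume Ω < ∞ := hΩb.measure_lt_top
  have : IsFiniteMeasure (volume.restrict Ω) := ⟨by simpa using hfin⟩
  have : Nontrivial (EuclideanSpace ℝ (Fin n)) := by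
    have : Nonempty (Fin n) := ⟨⟨0, by omega⟩⟩
    infer_instance
  rcases eq_or_ne a 0 with rfl | ha0
  · exact ⟨∅, 0, MeasurableSet.empty, Set.empty_subset _, measure_empty, by simp,
      fun x _ _ => hf0 x⟩
  obtain ⟨t, ht1, ht2⟩ := exists_level (volume.restrict Ω) f hf hf0 a (pos_iff_ne_zero.mpr ha0) M
    (by simpa [hM] using ha)
  have mlt : MeasurableSet {x | f x < t} := measurableSet_lt hf measurable_const
  have mle : MeasurableSet {x | f x ≤ t} := measurableSet_le hf measurable_const
  have meq : MeasurableSet {x | f x = t} := measurableSet_eq_fun hf measurable_const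
  rw [Measure.restrict_apply mlt] at ht1
  rw [Measure.restrict_apply mle] at ht2
  set D := {x | f x < t} ∩ Ω with hD
  set F := {x | f x = t} ∩ Ω with hF
  have mD : MeasurableSet D := mlt.inter hΩ
  have mF : MeasurableSet F := meq.inter hΩ
  have hDF : volume ({x | f x ≤ t} ∩ Ω) ≤ volume D + volume F := by
    refine le_trans (measure_mono ?_) (measure_union_le D F)
    rintro x ⟨hx, hxΩ⟩
    have hx2 : f x ≤ t := hx
    rcases lt_or_eq_of_le hx2 with h | h
    · exact Or.inl ⟨h, hxΩ⟩
    · exact Or.inr ⟨h, hxΩ⟩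
  rcases eq_or_ne (a - volume D) 0 with h0 | h0
  · refine ⟨D, t, mD, Set.inter_subset_right, le_antisymm ht1 (tsub_eq_zero_iff_le.mp h0),
      fun x hx => le_of_lt hx.1, fun x hx hxD => ?_⟩
    by_contra h
    exact hxD ⟨not_le.mp h, hx⟩
  obtain ⟨R, hR⟩ := hΩb.exists_norm_le
  have : IsFiniteMeasure (volume.restrict F) :=
    ⟨by simpa using lt_of_le_of_lt (measure_mono Set.inter_subset_right) hfin⟩
  obtain ⟨r, hr1, hr2⟩ := exists_level (volume.restrict F) (fun x => ‖x‖) measurable_norm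
    (fun x => norm_nonneg x) (a - volume D) (pos_iff_ne_zero.mpr h0) R (by
      rw [Measure.restrict_apply (measurableSet_le measurable_norm measurable_const)]
      have : {x : EuclideanSpace ℝ (Fin n) | ‖x‖ ≤ R} ∩ F = F :=
        Set.inter_eq_right.mpr fun x hx => hR x hx.2
      rw [this]
      exact tsub_le_iff_left.mpr (ht2.trans hDF))
  have mb : MeasurableSet {x : EuclideanSpace ℝ (Fin n) | ‖x‖ < r} :=
    measurableSet_lt measurable_norm measurable_const
  rw [Measure.restrict_apply mb] at hr1
  rw [Measure.restrict_apply (measurableSet_le measurable_norm measurable_const)] at hr2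
  have hsph : volume ({x : EuclideanSpace ℝ (Fin n) | ‖x‖ ≤ r} ∩ F) ≤
      volume ({x : EuclideanSpace ℝ (Fin n) | ‖x‖ < r} ∩ F) := by
    refine le_trans (measure_mono (t := ({x | ‖x‖ < r} ∩ F) ∪ Metric.sphere 0 r) ?_)
      (le_trans (measure_union_le _ _) ?_)
    · rintro x ⟨hx, hxF⟩
      have hx2 : ‖x‖ ≤ r := hx
      rcases lt_or_eq_of_le hx2 with h | h
      · exact Or.inl ⟨h, hxF⟩
      · exact Or.inr (by simpa using h)
    · rw [Measure.addHaar_sphere, add_zero]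
  have hG : volume ({x : EuclideanSpace ℝ (Fin n) | ‖x‖ < r} ∩ F) = a - volume D :=
    le_antisymm hr1 (hr2.trans hsph)
  refine ⟨D ∪ ({x | ‖x‖ < r} ∩ F), t, mD.union (mb.inter mF), ?_, ?_, ?_, ?_⟩
  · rintro x (hx | hx)
    · exact hx.2
    · exact hx.2.2
  · rw [measure_union ?_ (mb.inter mF), hG, add_tsub_cancel_of_le ht1]
    rw [Set.disjoint_left]
    rintro x hx ⟨_, hx'⟩
    exact absurd hx'.1 (ne_of_lt hx.1)
  · rintro x (hx | hx)
    · exact le_of_lt hx.1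
    · exact le_of_eq hx.2.1
  · intro x hx hxS
    by_contra h
    exact hxS (Or.inl ⟨not_le.mp h, hx⟩)


/-- For every `α > 0` and every `A ∈ [0,|Ω|]`, the generalized eigenvalue `Λ(α,A)` equals the
infimum of `(∫_Ω (Δu)² + α ∫_Ω η u²) / ∫_Ω u²` over measurable `η : Ω → [0,1]` with `∫_Ω η = A`
and smooth compactly supported `u ≢ 0`. -/
theorem statement1 {n : ℕ} (hn : 2 ≤ n) (Ω : Set (EuclideanSpace ℝ (Fin n)))
    (hne : Ω.Nonempty) (hΩo : IsOpen Ω) (hΩb : Bornology.IsBounded Ω)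
    (α : ℝ) (hα : 0 < α) (A : ℝ) (hA0 : 0 ≤ A) (hA1 : A ≤ (volume Ω).toReal) :
    Lam Ω α A = sInf { r : ℝ | ∃ η : EuclideanSpace ℝ (Fin n) → ℝ, Measurable η ∧
      (∀ᵐ x ∂volume.restrict Ω, 0 ≤ η x ∧ η x ≤ 1) ∧ (∫ x in Ω, η x) = A ∧
      ∃ u : EuclideanSpace ℝ (Fin n) → ℝ, TestFun Ω u ∧
        r = ((∫ x in Ω, lap u x ^ 2) + α * ∫ x in Ω, η x * u x ^ 2) / ∫ x in Ω, u x ^ 2 } := by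
  have hΩ : MeasurableSet Ω := hΩo.measurableSet
  have hfin : volume Ω < ∞ := hΩb.measure_lt_top
  have : IsFiniteMeasure (volume.restrict Ω) := ⟨by simpa using hfin⟩
  unfold Lam
  set P : Set ℝ := { r : ℝ | ∃ S : Set (EuclideanSpace ℝ (Fin n)), MeasurableSet S ∧ S ⊆ Ω ∧
      volume S = ENNReal.ofReal A ∧
      ∃ u : EuclideanSpace ℝ (Fin n) → ℝ, TestFun Ω u ∧
        r = ((∫ x in Ω, lap u x ^ 2) + α * ∫ x in S, u x ^ 2) / ∫ x in Ω, u x ^ 2 } with hP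
  set Q : Set ℝ := { r : ℝ | ∃ η : EuclideanSpace ℝ (Fin n) → ℝ, Measurable η ∧
      (∀ᵐ x ∂volume.restrict Ω, 0 ≤ η x ∧ η x ≤ 1) ∧ (∫ x in Ω, η x) = A ∧
      ∃ u : EuclideanSpace ℝ (Fin n) → ℝ, TestFun Ω u ∧
        r = ((∫ x in Ω, lap u x ^ 2) + α * ∫ x in Ω, η x * u x ^ 2) / ∫ x in Ω, u x ^ 2 } with hQ
  have hPQ : P ⊆ Q := by
    rintro r ⟨S, hS, hSΩ, hSA, u, hu, rfl⟩
    refine ⟨S.indicator 1, measurable_one.indicator hS, ?_, ?_, u, hu, ?_⟩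
    · refine Filter.Eventually.of_forall fun x => ?_
      by_cases hx : x ∈ S <;> simp [hx]
    · rw [integral_indicator_one hS, measureReal_restrict_apply hS,
        Set.inter_eq_left.mpr hSΩ, Measure.real, hSA, ENNReal.toReal_ofReal hA0]
    · have h1 : (fun x => S.indicator 1 x * u x ^ 2) = S.indicator fun x => u x ^ 2 := by
        funext x
        by_cases hx : x ∈ S <;> simp [hx]
      rw [h1, setIntegral_indicator hS, Set.inter_eq_right.mpr hSΩ]
  have hQb : BddBelow Q := by
    refine ⟨0, ?_⟩
    rintro r ⟨η, _, hη, _, u, _, rfl⟩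
    have h1 : 0 ≤ ∫ x in Ω, η x * u x ^ 2 := by
      refine integral_nonneg_of_ae ?_
      filter_upwards [hη] with x hx
      exact mul_nonneg hx.1 (sq_nonneg _)
    have h2 : 0 ≤ ∫ x in Ω, lap u x ^ 2 := integral_nonneg fun x => sq_nonneg _
    have h3 : 0 ≤ ∫ x in Ω, u x ^ 2 := integral_nonneg fun x => sq_nonneg _
    positivity
  have hQP : ∀ q ∈ Q, ∃ p ∈ P, p ≤ q := by
    rintro q ⟨η, hηm, hη, hηA, u, hu, rfl⟩
    have huc : Continuous u := hu.1.continuous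
    obtain ⟨C, hC⟩ := hu.2.1.exists_bound_of_continuous huc
    have hC2 : ∀ x, u x ^ 2 ≤ C ^ 2 := fun x => by
      rw [← sq_abs (u x)]
      exact pow_le_pow_left₀ (abs_nonneg _) (hC x) 2
    obtain ⟨S, t, hS, hSΩ, hSA, hS1, hS2⟩ := bathtub hn Ω hΩ hΩb (fun x => u x ^ 2)
      (by fun_prop) (fun x => sq_nonneg _) (C ^ 2) hC2 (ENNReal.ofReal A)
      (by rw [ENNReal.ofReal_le_iff_le_toReal hfin.ne]; exact hA1)
    refine ⟨_, ⟨S, hS, hSΩ, hSA, u, hu, rfl⟩, ?_⟩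
    have hηi : Integrable η (volume.restrict Ω) := by
      refine Integrable.of_bound hηm.aestronglyMeasurable 1 ?_
      filter_upwards [hη] with x hx
      rw [Real.norm_eq_abs, abs_le]
      constructor <;> linarith [hx.1, hx.2]
    have hSi : Integrable (S.indicator (1 : EuclideanSpace ℝ (Fin n) → ℝ))
        (volume.restrict Ω) := (integrable_const (1 : ℝ)).indicator hS
    have hub : ∀ᵐ x ∂volume.restrict Ω, ‖u x ^ 2‖ ≤ C ^ 2 :=
      Filter.Eventually.of_forall fun x => by
        rw [Real.norm_eq_abs, abs_of_nonneg (sq_nonneg _)]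
        exact hC2 x
    have hum : AEStronglyMeasurable (fun x => u x ^ 2) (volume.restrict Ω) :=
      (huc.pow 2).aestronglyMeasurable
    have hηu : Integrable (fun x => η x * u x ^ 2) (volume.restrict Ω) :=
      hηi.mul_bdd hum hub
    have hSu : Integrable (fun x => S.indicator 1 x * u x ^ 2) (volume.restrict Ω) :=
      hSi.mul_bdd hum hub
    have hSint : ∫ x in Ω, S.indicator (1 : EuclideanSpace ℝ (Fin n) → ℝ) x = A := by
      rw [integral_indicator_one hS, measureReal_restrict_apply hS,
        Set.inter_eq_left.mpr hSΩ, Measure.real, hSA, ENNReal.toReal_ofReal hA0]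
    have hSeq : ∫ x in Ω, S.indicator 1 x * u x ^ 2 = ∫ x in S, u x ^ 2 := by
      have h1 : (fun x => S.indicator 1 x * u x ^ 2) = S.indicator fun x => u x ^ 2 := by
        funext x
        by_cases hx : x ∈ S <;> simp [hx]
      rw [h1, setIntegral_indicator hS, Set.inter_eq_right.mpr hSΩ]
    have key : ∫ x in Ω, (S.indicator 1 x * u x ^ 2 - t * S.indicator 1 x) ≤
        ∫ x in Ω, (η x * u x ^ 2 - t * η x) := by
      refine integral_mono_ae (hSu.sub (hSi.const_mul t)) (hηu.sub (hηi.const_mul t)) ?_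
      filter_upwards [hη, ae_restrict_mem hΩ] with x hx hxΩ
      by_cases hxS : x ∈ S
      · have := hS1 x hxS
        simp only [Set.indicator_of_mem hxS, Pi.one_apply]
        nlinarith [hx.2]
      · have := hS2 x hxΩ hxS
        simp only [Set.indicator_of_notMem hxS]
        nlinarith [hx.1]
    rw [integral_sub hSu (hSi.const_mul t), integral_sub hηu (hηi.const_mul t),
      integral_const_mul, integral_const_mul, hSint, hηA, hSeq] at key
    have h3 : 0 ≤ ∫ x in Ω, u x ^ 2 := integral_nonneg fun x => sq_nonneg _
    have h4 : ∫ x in S, u x ^ 2 ≤ ∫ x in Ω, η x * u x ^ 2 := by linarith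
    gcongr
  rcases P.eq_empty_or_nonempty with hPe | hPne
  · have hQe : Q = ∅ := by
      rw [Set.eq_empty_iff_forall_notMem]
      intro q hq
      obtain ⟨p, hp, _⟩ := hQP q hq
      rw [hPe] at hp
      exact hp
    rw [hPe, hQe]
  · refine le_antisymm ?_ (csInf_le_csInf hQb hPne hPQ)
    refine le_csInf (hPne.mono hPQ) fun q hq => ?_
    obtain ⟨p, hp, hpq⟩ := hQP q hq
    exact le_trans (csInf_le (hQb.mono hPQ) hp) hpq
end
end

section
/- For every A ∈ [0, |Ω|], the function α ↦ Λ(α,A) is non-decreasing on (0,∞) and is Lipschitz continuous with Lipschitz constant A/|Ω|: for all α₁, α₂ > 0 one has |Λ(α₁,A) − Λ(α₂,A)| ≤ (A/|Ω|)·|α₁ − α₂|. -/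
open MeasureTheory ENNReal

noncomputable section

lemma quantile_real (ν : Measure ℝ) [IsFiniteMeasure ν] (A : ℝ≥0∞) (h0 : 0 < A)
    (h1 : A < ν Set.univ) : ∃ t : ℝ, ν (Set.Iio t) ≤ A ∧ A ≤ ν (Set.Iic t) := by
  have htop := tendsto_measure_Iic_atTop ν
  have hbot : Filter.Tendsto (fun x : ℝ => ν (Set.Iic x)) Filter.atBot (nhds 0) := by
    have h := tendsto_measure_iInter_atBot (μ := ν) (s := fun x : ℝ => Set.Iic x)
      (fun i => measurableSet_Iic.nullMeasurableSet) (fun a b h => Set.Iic_subset_Iic.2 h)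
      ⟨0, measure_ne_top _ _⟩
    have he : (⋂ x : ℝ, Set.Iic x) = ∅ := by
      ext y
      simp only [Set.mem_iInter, Set.mem_Iic, Set.mem_empty_iff_false, iff_false, not_forall,
        not_le]
      exact ⟨y - 1, by linarith⟩
    rw [he, measure_empty] at h
    exact h
  set T : Set ℝ := {t | A ≤ ν (Set.Iic t)} with hT
  have hne : T.Nonempty := by
    obtain ⟨t, ht⟩ := (htop.eventually (lt_mem_nhds h1)).exists
    exact ⟨t, ht.le⟩
  have hbdd : BddBelow T := by
    obtain ⟨t, ht⟩ := (hbot.eventually (gt_mem_nhds h0)).exists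
    refine ⟨t, fun s hs => ?_⟩
    by_contra hlt
    have : ν (Set.Iic s) ≤ ν (Set.Iic t) :=
      measure_mono (Set.Iic_subset_Iic.2 (not_le.1 hlt).le)
    exact absurd (lt_of_le_of_lt (le_trans hs this) ht) (lt_irrefl _)
  refine ⟨sInf T, ?_, ?_⟩
  · have hU : Set.Iio (sInf T) = ⋃ n : ℕ, Set.Iic (sInf T - 1 / ((n : ℝ) + 1)) := by
      ext y
      simp only [Set.mem_Iio, Set.mem_iUnion, Set.mem_Iic]
      constructor
      · intro h
        obtain ⟨n, hn⟩ := exists_nat_one_div_lt (sub_pos.2 h)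
        exact ⟨n, by linarith⟩
      · rintro ⟨n, hn⟩
        have : (0 : ℝ) < 1 / ((n : ℝ) + 1) := Nat.one_div_pos_of_nat
        linarith
    have hm : Monotone fun n : ℕ => Set.Iic (sInf T - 1 / ((n : ℝ) + 1)) := by
      intro a b hab
      have := Nat.one_div_le_one_div (α := ℝ) hab
      exact Set.Iic_subset_Iic.2 (by linarith)
    rw [hU, hm.measure_iUnion]
    refine iSup_le fun n => ?_
    by_contra hlt
    have hmem : sInf T - 1 / ((n : ℝ) + 1) ∈ T := (not_le.1 hlt).le
    have := csInf_le hbdd hmem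
    have : (0 : ℝ) < 1 / ((n : ℝ) + 1) := Nat.one_div_pos_of_nat
    linarith
  · have h := tendsto_measure_biInter_gt (μ := ν) (s := fun x : ℝ => Set.Iic x) (a := sInf T)
      (fun r _ => measurableSet_Iic.nullMeasurableSet) (fun i j _ h => Set.Iic_subset_Iic.2 h)
      ⟨sInf T + 1, by simp, measure_ne_top _ _⟩
    have he : (⋂ r > sInf T, Set.Iic r) = Set.Iic (sInf T) := by
      ext y
      simp only [Set.mem_iInter, Set.mem_Iic]
      exact ⟨fun H => le_of_forall_gt_imp_ge_of_dense H, fun H r hr => H.trans hr.le⟩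
    rw [he] at h
    refine ge_of_tendsto h ?_
    filter_upwards [self_mem_nhdsWithin] with r hr
    obtain ⟨s, hs, hsr⟩ := exists_lt_of_csInf_lt hne hr
    exact le_trans hs (measure_mono (Set.Iic_subset_Iic.2 hsr.le))

lemma quantile_fun {X : Type*} [MeasurableSpace X] (μ : Measure X) [IsFiniteMeasure μ]
    (g : X → ℝ) (hg : Measurable g) (A : ℝ≥0∞) (h0 : 0 < A) (h1 : A < μ Set.univ) :
    ∃ t : ℝ, μ {x | g x < t} ≤ A ∧ A ≤ μ {x | g x ≤ t} := by
  obtain ⟨t, h⟩ := quantile_real (μ.map g) A h0 (by rwa [Measure.map_apply hg .univ])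
  rw [Measure.map_apply hg measurableSet_Iio, Measure.map_apply hg measurableSet_Iic] at h
  exact ⟨t, h⟩

lemma exists_set_between {n : ℕ} (hn : 2 ≤ n) (P : Set (EuclideanSpace ℝ (Fin n)))
    (hP : MeasurableSet P) (hPf : volume P ≠ ∞) (B : ℝ≥0∞) (hB : B ≤ volume P) :
    ∃ T, MeasurableSet T ∧ T ⊆ P ∧ volume T = B := by
  rcases eq_or_lt_of_le hB with hB | hB
  · exact ⟨P, hP, subset_rfl, hB.symm⟩
  rcases eq_or_ne B 0 with rfl | h0
  · exact ⟨∅, .empty, Set.empty_subset _, measure_empty⟩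
  have : IsFiniteMeasure (volume.restrict P) := ⟨by simpa using hPf.lt_top⟩
  haveI : Nonempty (Fin n) := ⟨⟨0, by omega⟩⟩
  obtain ⟨t, h1, h2⟩ := quantile_fun (volume.restrict P) (fun x => ‖x‖) measurable_norm B
    (pos_iff_ne_zero.2 h0) (by simpa using hB)
  have e1 : MeasurableSet {x : EuclideanSpace ℝ (Fin n) | ‖x‖ ≤ t} :=
    measurableSet_le measurable_norm measurable_const
  have e2 : MeasurableSet {x : EuclideanSpace ℝ (Fin n) | ‖x‖ < t} :=
    measurableSet_lt measurable_norm measurable_const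
  rw [Measure.restrict_apply e2] at h1
  rw [Measure.restrict_apply e1] at h2
  refine ⟨{x | ‖x‖ ≤ t} ∩ P, e1.inter hP, Set.inter_subset_right, le_antisymm ?_ h2⟩
  have hsub : {x | ‖x‖ ≤ t} ∩ P ⊆ ({x | ‖x‖ < t} ∩ P) ∪ Metric.sphere 0 t := by
    rintro x ⟨hx, hxP⟩
    rcases lt_or_eq_of_le (show ‖x‖ ≤ t from hx) with h | h
    · exact Or.inl ⟨h, hxP⟩
    · exact Or.inr (by simpa using h)
  calc _ ≤ volume (({x | ‖x‖ < t} ∩ P) ∪ Metric.sphere 0 t) := measure_mono hsub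
    _ ≤ volume ({x | ‖x‖ < t} ∩ P) + volume (Metric.sphere (0 : EuclideanSpace ℝ (Fin n)) t) :=
        measure_union_le _ _
    _ ≤ B := by rw [Measure.addHaar_sphere, add_zero]; exact h1

lemma bathtub_s4 {n : ℕ} (hn : 2 ≤ n) (Ω : Set (EuclideanSpace ℝ (Fin n)))
    (hΩ : MeasurableSet Ω) (hΩf : volume Ω ≠ ∞) (f : EuclideanSpace ℝ (Fin n) → ℝ)
    (hf : Measurable f) (hf0 : ∀ x, 0 ≤ f x) (hfi : Integrable f)
    (A : ℝ) (hA0 : 0 ≤ A) (hA1 : A ≤ (volume Ω).toReal) :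
    ∃ S, MeasurableSet S ∧ S ⊆ Ω ∧ volume S = ENNReal.ofReal A ∧
      (volume Ω).toReal * ∫ x in S, f x ≤ A * ∫ x in Ω, f x := by
  rcases eq_or_lt_of_le hA0 with rfl | hA0
  · exact ⟨∅, .empty, Set.empty_subset _, by simp, by simp⟩
  rcases eq_or_lt_of_le hA1 with rfl | hA1
  · exact ⟨Ω, hΩ, subset_rfl, (ENNReal.ofReal_toReal hΩf).symm, le_rfl⟩
  have : IsFiniteMeasure (volume.restrict Ω) := ⟨by simpa using hΩf.lt_top⟩
  obtain ⟨t, h1, h2⟩ := quantile_fun (volume.restrict Ω) f hf (ENNReal.ofReal A)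
    (by simpa using hA0) (by
      rw [Measure.restrict_apply_univ]
      exact (ENNReal.ofReal_lt_iff_lt_toReal hA0.le hΩf).2 hA1)
  have e1 : MeasurableSet {x | f x ≤ t} := measurableSet_le hf measurable_const
  have e2 : MeasurableSet {x | f x < t} := measurableSet_lt hf measurable_const
  have e3 : MeasurableSet {x | f x = t} := measurableSet_eq_fun hf measurable_const
  rw [Measure.restrict_apply e2] at h1
  rw [Measure.restrict_apply e1] at h2
  have hle : {x | f x ≤ t} ∩ Ω = ({x | f x < t} ∩ Ω) ∪ ({x | f x = t} ∩ Ω) := by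
    ext x
    simp only [Set.mem_inter_iff, Set.mem_union, Set.mem_setOf_eq, le_iff_lt_or_eq]
    tauto
  have h3 : ENNReal.ofReal A - volume ({x | f x < t} ∩ Ω) ≤ volume ({x | f x = t} ∩ Ω) := by
    rw [tsub_le_iff_left]
    rw [hle] at h2
    exact h2.trans (measure_union_le _ _)
  obtain ⟨T, hTm, hTs, hTv⟩ := exists_set_between hn _ (e3.inter hΩ)
    (ne_top_of_le_ne_top hΩf (measure_mono Set.inter_subset_right)) _ h3
  set S := ({x | f x < t} ∩ Ω) ∪ T with hS
  have hSm : MeasurableSet S := (e2.inter hΩ).union hTm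
  have hSΩ : S ⊆ Ω :=
    Set.union_subset Set.inter_subset_right (hTs.trans Set.inter_subset_right)
  have hdis : Disjoint ({x | f x < t} ∩ Ω) T := by
    rw [Set.disjoint_left]
    rintro x ⟨hx, _⟩ hxT
    exact absurd (hTs hxT).1 (ne_of_lt hx)
  have hSv : volume S = ENNReal.ofReal A := by
    rw [hS, measure_union hdis hTm, hTv, add_tsub_cancel_of_le h1]
  have hSr : volume.real S = A := by rw [measureReal_def, hSv, ENNReal.toReal_ofReal hA0.le]
  have hSf : volume S ≠ ∞ := by rw [hSv]; exact ENNReal.ofReal_ne_top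
  have hDf : volume (Ω \ S) ≠ ∞ := ne_top_of_le_ne_top hΩf (measure_mono Set.diff_subset)
  refine ⟨S, hSm, hSΩ, hSv, ?_⟩
  have hDr : volume.real (Ω \ S) = (volume Ω).toReal - A := by
    rw [measureReal_sdiff hSΩ hSm hΩf, hSr, measureReal_def]
  have i1 : ∫ x in S, f x ≤ t * A := by
    have := setIntegral_mono_on (μ := volume) (s := S) (f := f) (g := fun _ => t)
      hfi.integrableOn (integrableOn_const hSf) hSm (by
        rintro x (hx | hx)
        · exact le_of_lt hx.1
        · exact le_of_eq (hTs hx).1)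
    rw [setIntegral_const, hSr, smul_eq_mul] at this
    linarith
  have i2 : t * ((volume Ω).toReal - A) ≤ ∫ x in Ω \ S, f x := by
    have := setIntegral_mono_on (μ := volume) (s := Ω \ S) (f := fun _ => t) (g := f)
      (integrableOn_const hDf) hfi.integrableOn (hΩ.diff hSm) (by
        rintro x ⟨hx, hxS⟩
        by_contra hlt
        exact hxS (Or.inl ⟨not_le.1 hlt, hx⟩))
    rw [setIntegral_const, hDr, smul_eq_mul] at this
    linarith
  have i3 : ∫ x in Ω \ S, f x = (∫ x in Ω, f x) - ∫ x in S, f x :=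
    setIntegral_diff hSm hfi.integrableOn hSΩ
  rw [i3] at i2
  have j1 := mul_le_mul_of_nonneg_right i1 (sub_pos.2 hA1).le
  have j2 := mul_le_mul_of_nonneg_right i2 hA0.le
  nlinarith

/-- The set of Rayleigh quotients. -/
def RQ {n : ℕ} (Ω : Set (EuclideanSpace ℝ (Fin n))) (α A : ℝ) : Set ℝ :=
  { r : ℝ | ∃ S : Set (EuclideanSpace ℝ (Fin n)), MeasurableSet S ∧ S ⊆ Ω ∧
      volume S = ENNReal.ofReal A ∧
      ∃ u : EuclideanSpace ℝ (Fin n) → ℝ, TestFun Ω u ∧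
        r = ((∫ x in Ω, lap u x ^ 2) + α * ∫ x in S, u x ^ 2) / ∫ x in Ω, u x ^ 2 }

lemma Lam_eq {n : ℕ} (Ω : Set (EuclideanSpace ℝ (Fin n))) (α A : ℝ) :
    Lam Ω α A = sInf (RQ Ω α A) := rfl

lemma RQ_bdd {n : ℕ} (Ω : Set (EuclideanSpace ℝ (Fin n))) (α A : ℝ) (hα : 0 < α) :
    BddBelow (RQ Ω α A) := by
  refine ⟨0, ?_⟩
  rintro r ⟨S, -, -, -, u, -, rfl⟩
  have h1 : 0 ≤ ∫ x in Ω, lap u x ^ 2 := integral_nonneg fun x => sq_nonneg _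
  have h2 : 0 ≤ ∫ x in S, u x ^ 2 := integral_nonneg fun x => sq_nonneg _
  have h3 : 0 ≤ ∫ x in Ω, u x ^ 2 := integral_nonneg fun x => sq_nonneg _
  positivity

lemma RQ_nonempty {n : ℕ} (Ω : Set (EuclideanSpace ℝ (Fin n))) (α β A : ℝ)
    (h : (RQ Ω α A).Nonempty) : (RQ Ω β A).Nonempty := by
  obtain ⟨r, S, h1, h2, h3, u, hu, -⟩ := h
  exact ⟨_, S, h1, h2, h3, u, hu, rfl⟩

lemma Lam_mono {n : ℕ} (Ω : Set (EuclideanSpace ℝ (Fin n))) (α β A : ℝ) (hα : 0 < α)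
    (hαβ : α ≤ β) : Lam Ω α A ≤ Lam Ω β A := by
  rw [Lam_eq, Lam_eq]
  rcases Set.eq_empty_or_nonempty (RQ Ω β A) with h | h
  · have h' : RQ Ω α A = ∅ := by
      by_contra hc
      exact (RQ_nonempty Ω α β A (Set.nonempty_iff_ne_empty.2 hc)).ne_empty h
    rw [h, h']
  · refine le_csInf h ?_
    rintro r ⟨S, hS1, hS2, hS3, u, hu, rfl⟩
    refine (csInf_le (RQ_bdd Ω α A hα) ⟨S, hS1, hS2, hS3, u, hu, rfl⟩).trans ?_
    have h2 : 0 ≤ ∫ x in S, u x ^ 2 := integral_nonneg fun x => sq_nonneg _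
    have h3 : 0 ≤ ∫ x in Ω, u x ^ 2 := integral_nonneg fun x => sq_nonneg _
    gcongr

lemma Lam_lip {n : ℕ} (hn : 2 ≤ n) (Ω : Set (EuclideanSpace ℝ (Fin n)))
    (hne : Ω.Nonempty) (hΩo : IsOpen Ω) (hΩb : Bornology.IsBounded Ω)
    (A : ℝ) (hA0 : 0 ≤ A) (hA1 : A ≤ (volume Ω).toReal) (α β : ℝ) (hα : 0 < α)
    (hαβ : α ≤ β) : Lam Ω β A ≤ Lam Ω α A + A / (volume Ω).toReal * (β - α) := by
  have hΩf : volume Ω ≠ ∞ := hΩb.measure_lt_top.ne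
  have hV : 0 < (volume Ω).toReal := ENNReal.toReal_pos (hΩo.measure_pos _ hne).ne' hΩf
  rw [Lam_eq, Lam_eq, ← sub_le_iff_le_add]
  rcases Set.eq_empty_or_nonempty (RQ Ω α A) with h | h
  · have h' : RQ Ω β A = ∅ := by
      by_contra hc
      exact (RQ_nonempty Ω β α A (Set.nonempty_iff_ne_empty.2 hc)).ne_empty h
    rw [h, h', Real.sInf_empty, zero_sub, neg_nonpos]
    have := sub_nonneg.2 hαβ
    positivity
  refine le_csInf h ?_
  rintro r ⟨S, hS1, hS2, hS3, u, hu, rfl⟩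
  have hcont : Continuous u := hu.1.continuous
  have hc2 : Continuous fun x => u x ^ 2 := hcont.pow 2
  have hi : Integrable fun x => u x ^ 2 := by
    refine hc2.integrable_of_hasCompactSupport ?_
    exact hu.2.1.comp_left (g := fun y : ℝ => y ^ 2) (by norm_num)
  have key : ∃ S', MeasurableSet S' ∧ S' ⊆ Ω ∧ volume S' = ENNReal.ofReal A ∧
      (volume Ω).toReal * (∫ x in S', u x ^ 2) ≤ A * (∫ x in Ω, u x ^ 2) ∧
      ∫ x in S', u x ^ 2 ≤ ∫ x in S, u x ^ 2 := by
    obtain ⟨S', b1, b2, b3, b4⟩ := bathtub_s4 hn Ω hΩo.measurableSet hΩf (fun x => u x ^ 2)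
      hc2.measurable (fun x => sq_nonneg _) hi A hA0 hA1
    rcases le_total (∫ x in S', u x ^ 2) (∫ x in S, u x ^ 2) with hle | hle
    · exact ⟨S', b1, b2, b3, b4, hle⟩
    · exact ⟨S, hS1, hS2, hS3, (mul_le_mul_of_nonneg_left hle hV.le).trans b4, le_rfl⟩
  obtain ⟨S', b1, b2, b3, b4, b5⟩ := key
  rw [sub_le_iff_le_add]
  refine (csInf_le (RQ_bdd Ω β A (hα.trans_le hαβ)) ⟨S', b1, b2, b3, u, hu, rfl⟩).trans ?_
  have h3 : 0 ≤ ∫ x in Ω, u x ^ 2 := integral_nonneg fun x => sq_nonneg _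
  have hβα := sub_nonneg.2 hαβ
  generalize (∫ x in Ω, u x ^ 2) = D at *
  generalize (∫ x in S, u x ^ 2) = I at *
  generalize (∫ x in S', u x ^ 2) = J at *
  generalize (∫ x in Ω, lap u x ^ 2) = L at *
  generalize (volume Ω).toReal = V at *
  rcases eq_or_lt_of_le h3 with hD | hD
  · rw [← hD, _root_.div_zero, _root_.div_zero, zero_add]
    positivity
  have hJ : J ≤ A / V * D := by
    rw [div_mul_eq_mul_div, le_div_iff₀ hV]; linarith
  rw [div_le_iff₀ hD, add_mul, div_mul_cancel₀ _ hD.ne']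
  have k1 := mul_le_mul_of_nonneg_left b5 hα.le
  have k2 := mul_le_mul_of_nonneg_left hJ hβα
  nlinarith

/-- For every `A ∈ [0,|Ω|]`, the map `α ↦ Λ(α,A)` is non-decreasing on `(0,∞)` and Lipschitz
continuous with Lipschitz constant `A/|Ω|`. -/
theorem statement4 {n : ℕ} (hn : 2 ≤ n) (Ω : Set (EuclideanSpace ℝ (Fin n)))
    (hne : Ω.Nonempty) (hΩo : IsOpen Ω) (hΩb : Bornology.IsBounded Ω)
    (A : ℝ) (hA0 : 0 ≤ A) (hA1 : A ≤ (volume Ω).toReal) :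
    MonotoneOn (fun α => Lam Ω α A) (Set.Ioi (0 : ℝ)) ∧
    ∀ α₁ α₂ : ℝ, 0 < α₁ → 0 < α₂ →
      |Lam Ω α₁ A - Lam Ω α₂ A| ≤ A / (volume Ω).toReal * |α₁ - α₂| := by
  refine ⟨fun a ha b _ hab => Lam_mono Ω a b A ha hab, ?_⟩
  intro a b ha hb
  rcases le_total a b with hab | hab
  · have h1 := Lam_mono Ω a b A ha hab
    have h2 := Lam_lip hn Ω hne hΩo hΩb A hA0 hA1 a b ha hab
    rw [abs_of_nonpos (sub_nonpos.2 h1), abs_of_nonpos (sub_nonpos.2 hab), neg_sub, neg_sub]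
    linarith
  · have h1 := Lam_mono Ω b a A hb hab
    have h2 := Lam_lip hn Ω hne hΩo hΩb A hA0 hA1 b a hb hab
    rw [abs_of_nonneg (sub_nonneg.2 h1), abs_of_nonneg (sub_nonneg.2 hab)]
    linarith
end
end

section
/- For every A ∈ [0, |Ω|) there exists a unique real number ᾱ(A) > 0 such that Λ(ᾱ(A), A) = ᾱ(A). -/
open MeasureTheory ENNReal

noncomputable section

theorem abs_fixed (P : Set (ℝ × ℝ)) (c : ℝ) (hc : 0 < c)
    (hP : ∀ p ∈ P, c ≤ p.1 ∧ 0 ≤ p.2 ∧ p.2 ≤ 1) (h0 : ∃ p ∈ P, p.2 = 0) (L : ℝ → ℝ)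
    (hL : ∀ a, L a = sInf ((fun p : ℝ × ℝ => p.1 + a * p.2) '' P)) :
    ∃! a : ℝ, 0 < a ∧ L a = a := by
  obtain ⟨p0, hp0, hp02⟩ := h0
  have hne : ∀ a : ℝ, ((fun p : ℝ × ℝ => p.1 + a * p.2) '' P).Nonempty :=
    fun a => ⟨_, p0, hp0, rfl⟩
  have hle : ∀ a, 0 ≤ a → ∀ p ∈ P, L a ≤ p.1 + a * p.2 := by
    intro a ha p hp
    rw [hL]
    refine csInf_le ⟨0, ?_⟩ ⟨p, hp, rfl⟩
    rintro _ ⟨q, hq, rfl⟩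
    obtain ⟨h1, h2, h3⟩ := hP q hq
    have := mul_nonneg ha h2
    simp only; linarith
  have hge : ∀ a b, (∀ p ∈ P, b ≤ p.1 + a * p.2) → b ≤ L a := by
    intro a b h
    rw [hL]
    refine le_csInf (hne a) ?_
    rintro _ ⟨q, hq, rfl⟩
    exact h q hq
  have hmono : ∀ a b, 0 ≤ a → a ≤ b → L a ≤ L b := by
    intro a b ha hab
    refine hge b _ fun p hp => (hle a ha p hp).trans ?_
    have := mul_le_mul_of_nonneg_right hab (hP p hp).2.1
    linarith
  have hlip : ∀ a b, 0 ≤ a → a ≤ b → L b ≤ L a + (b - a) := by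
    intro a b ha hab
    have : L b - (b - a) ≤ L a := by
      refine hge a _ fun p hp => ?_
      have h1 := hle b (ha.trans hab) p hp
      have h2 := mul_le_mul_of_nonneg_left (hP p hp).2.2 (sub_nonneg.2 hab)
      nlinarith
    linarith
  have hcont : ContinuousOn L (Set.Ici 0) := by
    have : LipschitzOnWith 1 L (Set.Ici 0) := by
      refine LipschitzOnWith.of_le_add fun x hx y hy => ?_
      rw [Real.dist_eq]
      rcases le_total x y with h | h
      · have := hmono x y hx h
        have := abs_nonneg (x - y); linarith
      · have := hlip y x hy h
        have := le_abs_self (x - y); linarith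
    exact this.continuousOn
  have hL0 : c ≤ L 0 := hge 0 c fun p hp => by have := (hP p hp).1; linarith
  have hp01 := (hP p0 hp0).1
  have hLC : ∀ a, 0 ≤ a → L a ≤ p0.1 := fun a ha => by
    have := hle a ha p0 hp0
    rw [hp02] at this; linarith
  have hex : ∃ a ∈ Set.Icc 0 p0.1, L a - a = 0 := by
    have hc2 : ContinuousOn (fun a => L a - a) (Set.Icc 0 p0.1) :=
      (hcont.mono fun x hx => hx.1).sub continuousOn_id
    have := intermediate_value_Icc' (by linarith : (0:ℝ) ≤ p0.1) hc2
    have h2 := hLC p0.1 (by linarith)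
    obtain ⟨a, ha, hh⟩ := this (show (0:ℝ) ∈ Set.Icc _ _ from ⟨by linarith, by linarith⟩)
    exact ⟨a, ha, hh⟩
  have huniq : ∀ a b, 0 < a → a < b → L a = a → L b = b → False := by
    intro a b ha hab hLa hLb
    have key : (1 - a / b) * c + (a / b) * b ≤ L a := by
      refine hge a _ fun p hp => ?_
      have hb : 0 < b := ha.trans hab
      have h1 := hle b hb.le p hp
      rw [hLb] at h1
      have h2 := (hP p hp).1
      have ht : 0 ≤ a / b := by positivity
      have ht1 : 0 ≤ 1 - a / b := by
        rw [sub_nonneg, div_le_one hb]; exact hab.le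
      have e : a / b * b = a := by field_simp
      have h3 := mul_le_mul_of_nonneg_left h1 ht
      have h4 := mul_le_mul_of_nonneg_left h2 ht1
      have e2 : a / b * (p.1 + b * p.2) = a / b * p.1 + a * p.2 := by
        rw [mul_add, ← mul_assoc, e]
      rw [e2] at h3
      linarith
    have hb : 0 < b := ha.trans hab
    have e : a / b * b = a := by field_simp
    have : 0 < 1 - a / b := by rw [sub_pos, div_lt_one hb]; exact hab
    have := mul_pos this hc
    rw [e, hLa] at key
    linarith
  obtain ⟨a, ha, haL⟩ := hex
  have ha0 : 0 < a := by
    rcases ha.1.lt_or_eq with h | h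
    · exact h
    · subst h; linarith
  refine ⟨a, ⟨ha0, by linarith⟩, ?_⟩
  rintro b ⟨hb, hbL⟩
  rcases lt_trichotomy a b with h | h | h
  · exact (huniq a b ha0 h (by linarith) hbL).elim
  · exact h.symm
  · exact (huniq b a hb h hbL (by linarith)).elim

theorem exists_sub {n : ℕ} (hn : 1 ≤ n) (M : Set (EuclideanSpace ℝ (Fin n)))
    (hM : MeasurableSet M) (hb : Bornology.IsBounded M) (A : ℝ) (hA0 : 0 ≤ A)
    (hA : A ≤ volume.real M) : ∃ S, MeasurableSet S ∧ S ⊆ M ∧ volume S = ENNReal.ofReal A := by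
  obtain ⟨R, hR0, hR⟩ : ∃ R : ℝ, 0 ≤ R ∧ M ⊆ Metric.closedBall 0 R := by
    obtain ⟨R, hR⟩ := hb.subset_closedBall 0
    exact ⟨max R 0, le_max_right _ _, hR.trans (Metric.closedBall_subset_closedBall (le_max_left _ _))⟩
  have : Nonempty (Fin n) := ⟨⟨0, hn⟩⟩
  have : Nontrivial (EuclideanSpace ℝ (Fin n)) := inferInstance
  have hfin : ∀ t : ℝ, volume (Metric.closedBall (0 : EuclideanSpace ℝ (Fin n)) t) ≠ ⊤ :=
    fun t => (measure_closedBall_lt_top).ne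
  set f : ℝ → ℝ := fun t => volume.real (M ∩ Metric.closedBall 0 t) with hf
  set F : ℝ → ℝ := fun t => volume.real (Metric.closedBall (0 : EuclideanSpace ℝ (Fin n)) t) with hF
  have hFc : ContinuousOn F (Set.Icc 0 R) := by
    have : ContinuousOn (fun t : ℝ => t ^ n * volume.real (Metric.ball (0 : EuclideanSpace ℝ (Fin n)) 1))
        (Set.Icc 0 R) := by fun_prop
    refine this.congr fun t ht => ?_
    simp only [hF, Measure.real]
    rw [Measure.addHaar_closedBall _ _ ht.1, ENNReal.toReal_mul, ENNReal.toReal_ofReal (pow_nonneg ht.1 _)]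
    simp
  have hfF : ∀ s t, s ≤ t → f s ≤ f t ∧ f t - f s ≤ F t - F s := by
    intro s t hst
    have hsub := Metric.closedBall_subset_closedBall (x := (0 : EuclideanSpace ℝ (Fin n))) hst
    have hfin2 : ∀ r : ℝ, volume (M ∩ Metric.closedBall (0 : EuclideanSpace ℝ (Fin n)) r) ≠ ⊤ :=
      fun r => measure_ne_top_of_subset Set.inter_subset_right (hfin r)
    refine ⟨measureReal_mono (Set.inter_subset_inter_right _ hsub) (hfin2 t), ?_⟩
    have h1 : f t - f s = volume.real ((M ∩ Metric.closedBall 0 t) \ (M ∩ Metric.closedBall 0 s)) :=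
      (measureReal_sdiff' (hM.inter measurableSet_closedBall) (hfin2 t) (hfin2 s) |>.trans (by
        rw [Set.union_eq_self_of_subset_right (Set.inter_subset_inter_right _ hsub)])).symm
    have h2 : F t - F s = volume.real ((Metric.closedBall (0 : EuclideanSpace ℝ (Fin n)) t) \ (Metric.closedBall 0 s)) :=
      (measureReal_sdiff' measurableSet_closedBall (hfin t) (hfin s) |>.trans (by
        rw [Set.union_eq_self_of_subset_right hsub])).symm
    rw [h1, h2]
    refine measureReal_mono ?_ (measure_ne_top_of_subset Set.sdiff_subset (hfin t))
    rintro x ⟨⟨hx1, hx2⟩, hx3⟩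
    exact ⟨hx2, fun h => hx3 ⟨hx1, h⟩⟩
  have hdist : ∀ s t, dist (f s) (f t) ≤ dist (F s) (F t) := by
    intro s t
    rw [Real.dist_eq, Real.dist_eq]
    rcases le_total s t with h | h
    · obtain ⟨h1, h2⟩ := hfF s t h
      rw [abs_sub_comm, abs_of_nonneg (sub_nonneg.2 h1), abs_sub_comm]
      exact h2.trans (le_abs_self _)
    · obtain ⟨h1, h2⟩ := hfF t s h
      rw [abs_of_nonneg (sub_nonneg.2 h1)]
      exact h2.trans (le_abs_self _)
  have hfc : ContinuousOn f (Set.Icc 0 R) := by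
    rw [Metric.continuousOn_iff] at hFc ⊢
    intro b hb ε hε
    obtain ⟨δ, hδ, h⟩ := hFc b hb ε hε
    exact ⟨δ, hδ, fun a ha hab => (hdist a b).trans_lt (h a ha hab)⟩
  have hf0 : f 0 = 0 := by
    simp only [hf, Metric.closedBall_zero, Measure.real]
    rw [measure_mono_null Set.inter_subset_right (measure_singleton _)]; rfl
  have hfR : f R = volume.real M := by
    simp only [hf]; rw [Set.inter_eq_self_of_subset_left hR]
  obtain ⟨t, -, ht⟩ := intermediate_value_Icc hR0 hfc (show A ∈ Set.Icc _ _ by rw [hf0, hfR]; exact ⟨hA0, hA⟩)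
  refine ⟨M ∩ Metric.closedBall 0 t, hM.inter measurableSet_closedBall, Set.inter_subset_left, ?_⟩
  rw [← ht]
  simp only [hf, Measure.real]
  rw [ENNReal.ofReal_toReal (measure_ne_top_of_subset Set.inter_subset_right (hfin t))]

theorem key_parts {n : ℕ} (u : EuclideanSpace ℝ (Fin n) → ℝ) (hu : ContDiff ℝ (⊤ : ℕ∞) u)
    (hc : HasCompactSupport u) (R : ℝ) (v : EuclideanSpace ℝ (Fin n)) (hv : ‖v‖ = 1) :
    ∫ x, (‖x‖ ^ 2 - R) * (2 * (fderiv ℝ u x v) ^ 2 + 2 * (u x * iteratedFDeriv ℝ 2 u x ![v, v]))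
      = 2 * ∫ x, u x ^ 2 := by
  have hg : ContDiff ℝ (⊤ : ℕ∞) (fun x => fderiv ℝ u x v) := by
    exact (hu.fderiv_right (m := (⊤ : ℕ∞)) (by simp)).clm_apply contDiff_const
  have hgc : HasCompactSupport (fun x => fderiv ℝ u x v) := hc.fderiv_apply (𝕜 := ℝ) v
  set g := fun x => fderiv ℝ u x v with hgdef
  have hud : Differentiable ℝ u := hu.differentiable (by simp)
  have hgd : Differentiable ℝ g := hg.differentiable (by simp)
  have hh : ∀ x, iteratedFDeriv ℝ 2 u x ![v, v] = fderiv ℝ g x v := by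
    intro x
    rw [iteratedFDeriv_two_apply]
    simp only [Matrix.cons_val_zero, Matrix.cons_val_one]
    have hd : DifferentiableAt ℝ (fderiv ℝ u) x :=
      ((hu.fderiv_right (m := (⊤ : ℕ∞)) (by simp)).differentiable (by simp)) x
    rw [hgdef, fderiv_clm_apply hd (by fun_prop)]
    simp
  set G := fun x => 2 * (u x * g x) with hG
  have hGs : ContDiff ℝ (⊤ : ℕ∞) G := contDiff_const.mul (hu.mul hg)
  have hGc : HasCompactSupport G := (hc.mul_right (f' := g)).mul_left (f := fun _ => (2:ℝ))
  have hGd : Differentiable ℝ G := hGs.differentiable (by simp)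
  have hGf : ∀ x, fderiv ℝ G x v = 2 * (fderiv ℝ u x v) ^ 2 + 2 * (u x * fderiv ℝ g x v) := by
    intro x
    have h := (((hud x).hasFDerivAt.mul (hgd x).hasFDerivAt).const_mul 2)
    have := h.fderiv
    change fderiv ℝ G x = _ at this
    rw [this]
    simp [hgdef]; ring
  have hWf : ∀ x, fderiv ℝ (fun y => u y ^ 2) x v = G x := by
    intro x
    have h := ((hud x).hasFDerivAt.pow 2)
    rw [h.fderiv]
    simp [hG, hgdef]; ring
  set φ : EuclideanSpace ℝ (Fin n) → ℝ := fun x => ‖x‖ ^ 2 - R with hφ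
  have hφs : ContDiff ℝ (⊤ : ℕ∞) φ := (contDiff_norm_sq ℝ).sub contDiff_const
  have hφf : ∀ x, fderiv ℝ φ x v = 2 * inner ℝ x v := by
    intro x
    have h := ((hasStrictFDerivAt_norm_sq x).hasFDerivAt.sub_const R)
    rw [h.fderiv]
    simp
  set ψ : EuclideanSpace ℝ (Fin n) → ℝ := fun x => 2 * inner ℝ x v with hψ
  have hψs : ContDiff ℝ (⊤ : ℕ∞) ψ := by
    apply contDiff_const.mul; exact contDiff_id.inner ℝ contDiff_const
  have hψf : ∀ x, fderiv ℝ ψ x v = 2 := by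
    intro x
    have h := (((hasFDerivAt_id x).inner ℝ (hasFDerivAt_const v x)).const_mul (2:ℝ))
    have h2 := h.fderiv
    change fderiv ℝ ψ x = _ at h2
    rw [h2]
    simp [hv]
  have hw : ContDiff ℝ (⊤ : ℕ∞) (fun y => u y ^ 2) := hu.pow 2
  have hwc : HasCompactSupport (fun y => u y ^ 2) := by
    exact HasCompactSupport.intro hc fun x hx => by simp [image_eq_zero_of_notMem_tsupport hx]
  have hint : ∀ p q : EuclideanSpace ℝ (Fin n) → ℝ, Continuous p → Continuous q →
      HasCompactSupport q → Integrable (fun x => p x * q x) := fun p q hp hq hqc =>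
    (hp.mul hq).integrable_of_hasCompactSupport (hqc.mul_left (f := p))
  have cfd : ∀ p : EuclideanSpace ℝ (Fin n) → ℝ, ContDiff ℝ (⊤ : ℕ∞) p →
      Continuous fun x => fderiv ℝ p x v := fun p hp =>
    ((hp.fderiv_right (m := (⊤ : ℕ∞)) (by simp)).clm_apply contDiff_const).continuous
  have e1 := integral_mul_fderiv_eq_neg_fderiv_mul_of_integrable (μ := volume) (f := φ) (g := G) (v := v)
    (hint _ _ (cfd _ hφs) hGs.continuous hGc)
    (hint _ _ hφs.continuous (cfd _ hGs) (hGc.fderiv_apply (𝕜 := ℝ) v))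
    (hint _ _ hφs.continuous hGs.continuous hGc)
    (fun x _ => (hφs.differentiable (by simp)) x) (fun x _ => hGd x)
  have e2 := integral_mul_fderiv_eq_neg_fderiv_mul_of_integrable (μ := volume) (f := ψ)
    (g := fun y => u y ^ 2) (v := v)
    (hint _ _ (cfd _ hψs) hw.continuous hwc)
    (hint _ _ hψs.continuous (cfd _ hw) (hwc.fderiv_apply (𝕜 := ℝ) v))
    (hint _ _ hψs.continuous hw.continuous hwc)
    (fun x _ => (hψs.differentiable (by simp)) x) (fun x _ => (hw.differentiable (by simp)) x)
  simp only [hGf, hφf] at e1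
  simp only [hWf, hψf] at e2
  simp only [hh]
  rw [e1, e2, integral_const_mul, neg_neg]

theorem cont_lap {n : ℕ} (u : EuclideanSpace ℝ (Fin n) → ℝ) (hu : ContDiff ℝ (⊤ : ℕ∞) u) :
    ∀ v w, Continuous (fun x => iteratedFDeriv ℝ 2 u x ![v, w]) := by
  intro v w
  have : Continuous (iteratedFDeriv ℝ 2 u) :=
    hu.continuous_iteratedFDeriv (m := 2) (by norm_cast)
  fun_prop

theorem lap_zero {n : ℕ} (u : EuclideanSpace ℝ (Fin n) → ℝ) (x) (hx : x ∉ tsupport u) :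
    lap u x = 0 := by
  have h : iteratedFDeriv ℝ 2 u x = 0 := by
    by_contra h
    exact hx (support_iteratedFDeriv_subset (𝕜 := ℝ) 2 h)
  simp [lap, h]

theorem poincare {n : ℕ} (hn : 1 ≤ n) (u : EuclideanSpace ℝ (Fin n) → ℝ)
    (hu : ContDiff ℝ (⊤ : ℕ∞) u) (hc : HasCompactSupport u) (R : ℝ)
    (hR : ∀ x ∈ tsupport u, ‖x‖ ^ 2 ≤ R) :
    ∫ x, u x ^ 2 ≤ R ^ 2 * ∫ x, lap u x ^ 2 := by
  have hlapc : Continuous (lap u) := by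
    unfold lap
    exact continuous_finsetSum _ fun i _ => cont_lap u hu _ _
  have hlaps : HasCompactSupport (lap u) :=
    HasCompactSupport.intro hc fun x hx => lap_zero u x hx
  have hu2 : Integrable (fun x => u x ^ 2) :=
    (hu.continuous.pow 2).integrable_of_hasCompactSupport
      (HasCompactSupport.intro hc fun x hx => by simp [image_eq_zero_of_notMem_tsupport hx])
  have hl2 : Integrable (fun x => lap u x ^ 2) :=
    (hlapc.pow 2).integrable_of_hasCompactSupport
      (HasCompactSupport.intro hc fun x hx => by simp [lap_zero u x hx])
  have hterm : ∀ i : Fin n, Integrable (fun x => (‖x‖ ^ 2 - R) *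
      (2 * (fderiv ℝ u x (EuclideanSpace.single i 1)) ^ 2 + 2 * (u x *
        iteratedFDeriv ℝ 2 u x ![EuclideanSpace.single i 1, EuclideanSpace.single i 1]))) := by
    intro i
    have h1 : Continuous fun x => fderiv ℝ u x (EuclideanSpace.single i 1) :=
      ((hu.fderiv_right (m := (⊤ : ℕ∞)) (by simp)).clm_apply contDiff_const).continuous
    have h2 := cont_lap u hu (EuclideanSpace.single i 1) (EuclideanSpace.single i 1)
    have h3 := hu.continuous
    refine Continuous.integrable_of_hasCompactSupport (by fun_prop) ?_
    refine HasCompactSupport.intro hc fun x hx => ?_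
    have : fderiv ℝ u x = 0 := by
      by_contra h
      exact hx (support_fderiv_subset ℝ h)
    simp [image_eq_zero_of_notMem_tsupport hx, this]
  have hsum : ∫ x, ∑ i : Fin n, (‖x‖ ^ 2 - R) *
      (2 * (fderiv ℝ u x (EuclideanSpace.single i 1)) ^ 2 + 2 * (u x *
        iteratedFDeriv ℝ 2 u x ![EuclideanSpace.single i 1, EuclideanSpace.single i 1]))
      = n * (2 * ∫ x, u x ^ 2) := by
    rw [integral_finsetSum _ fun i _ => hterm i]
    rw [Finset.sum_congr rfl fun i _ => key_parts u hu hc R (EuclideanSpace.single i 1) (by simp)]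
    simp
  have hle : ∫ x, ∑ i : Fin n, (‖x‖ ^ 2 - R) *
      (2 * (fderiv ℝ u x (EuclideanSpace.single i 1)) ^ 2 + 2 * (u x *
        iteratedFDeriv ℝ 2 u x ![EuclideanSpace.single i 1, EuclideanSpace.single i 1]))
      ≤ ∫ x, (u x ^ 2 + R ^ 2 * lap u x ^ 2) := by
    refine integral_mono (integrable_finsetSum _ fun i _ => hterm i) (hu2.add (hl2.const_mul _)) ?_
    intro x
    simp only
    by_cases hx : x ∈ tsupport u
    · have hRx := hR x hx
      have e : ∑ i : Fin n, (‖x‖ ^ 2 - R) *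
        (2 * (fderiv ℝ u x (EuclideanSpace.single i 1)) ^ 2 + 2 * (u x *
          iteratedFDeriv ℝ 2 u x ![EuclideanSpace.single i 1, EuclideanSpace.single i 1]))
          = (‖x‖ ^ 2 - R) * (2 * ∑ i : Fin n, (fderiv ℝ u x (EuclideanSpace.single i 1)) ^ 2)
            + (‖x‖ ^ 2 - R) * (2 * (u x * lap u x)) := by
        simp only [lap, Finset.mul_sum, ← Finset.sum_add_distrib]
        refine Finset.sum_congr rfl fun i _ => by ring
      rw [e]
      have h0 : 0 ≤ ∑ i : Fin n, (fderiv ℝ u x (EuclideanSpace.single i 1)) ^ 2 :=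
        Finset.sum_nonneg fun i _ => sq_nonneg _
      have h1 : (‖x‖ ^ 2 - R) * (2 * ∑ i : Fin n, (fderiv ℝ u x (EuclideanSpace.single i 1)) ^ 2) ≤ 0 :=
        mul_nonpos_of_nonpos_of_nonneg (by linarith) (by positivity)
      have h2 : (‖x‖ ^ 2 - R) ^ 2 ≤ R ^ 2 := by
        have := sq_nonneg ‖x‖
        nlinarith
      have h3 := mul_le_mul_of_nonneg_right h2 (sq_nonneg (lap u x))
      nlinarith [sq_nonneg (u x - (‖x‖ ^ 2 - R) * lap u x)]
    · have : fderiv ℝ u x = 0 := by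
        by_contra h
        exact hx (support_fderiv_subset ℝ h)
      simp [image_eq_zero_of_notMem_tsupport hx, this]
      positivity
  rw [hsum, integral_add hu2 (hl2.const_mul _), integral_const_mul] at hle
  have hn' : (1:ℝ) ≤ n := by exact_mod_cast hn
  have h0 : 0 ≤ ∫ x, u x ^ 2 := integral_nonneg fun x => sq_nonneg _
  nlinarith

/-- For every `A ∈ [0,|Ω|)` there is a unique `ᾱ(A) > 0` with `Λ(ᾱ(A),A) = ᾱ(A)`. -/
theorem statement6 {n : ℕ} (hn : 2 ≤ n) (Ω : Set (EuclideanSpace ℝ (Fin n)))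
    (hne : Ω.Nonempty) (hΩo : IsOpen Ω) (hΩb : Bornology.IsBounded Ω)
    (A : ℝ) (hA0 : 0 ≤ A) (hA1 : A < (volume Ω).toReal) :
    ∃! a : ℝ, 0 < a ∧ Lam Ω a A = a := by
  obtain ⟨r, hr0, hr⟩ : ∃ r : ℝ, 0 < r ∧ Ω ⊆ Metric.closedBall 0 r := by
    obtain ⟨R, hR⟩ := hΩb.subset_closedBall 0
    exact ⟨max R 1, by positivity, hR.trans (Metric.closedBall_subset_closedBall (le_max_left _ _))⟩
  have : Nonempty (Fin n) := ⟨⟨0, by omega⟩⟩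
  have hu2i : ∀ u, TestFun Ω u → Integrable (fun x => u x ^ 2) := fun u hu =>
    (hu.1.continuous.pow 2).integrable_of_hasCompactSupport
      (HasCompactSupport.intro hu.2.1 fun x hx => by simp [image_eq_zero_of_notMem_tsupport hx])
  have hD : ∀ u, TestFun Ω u → ∫ x in Ω, u x ^ 2 = ∫ x, u x ^ 2 := fun u hu =>
    setIntegral_eq_integral_of_forall_compl_eq_zero fun x hx => by
      simp [image_eq_zero_of_notMem_tsupport fun h => hx (hu.2.2.1 h)]
  have hI : ∀ u, TestFun Ω u → ∫ x in Ω, lap u x ^ 2 = ∫ x, lap u x ^ 2 := fun u hu =>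
    setIntegral_eq_integral_of_forall_compl_eq_zero fun x hx => by
      simp [lap_zero u x fun h => hx (hu.2.2.1 h)]
  have hDpos : ∀ u, TestFun Ω u → 0 < ∫ x in Ω, u x ^ 2 := by
    intro u hu
    rw [hD u hu]
    obtain ⟨x, hx⟩ := Function.ne_iff.1 hu.2.2.2
    refine (hu.1.continuous.pow 2).integral_pos_of_hasCompactSupport_nonneg_nonzero
      (HasCompactSupport.intro hu.2.1 fun x hx => by simp [image_eq_zero_of_notMem_tsupport hx])
      (fun x => sq_nonneg _) (x := x) (by simpa using hx)
  let P : Set (ℝ × ℝ) := {p | ∃ S : Set (EuclideanSpace ℝ (Fin n)), MeasurableSet S ∧ S ⊆ Ω ∧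
      volume S = ENNReal.ofReal A ∧
      ∃ u : EuclideanSpace ℝ (Fin n) → ℝ, TestFun Ω u ∧
        p = ((∫ x in Ω, lap u x ^ 2) / ∫ x in Ω, u x ^ 2,
          (∫ x in S, u x ^ 2) / ∫ x in Ω, u x ^ 2)}
  refine abs_fixed P (1 / (r ^ 2) ^ 2) (by positivity) ?_ ?_ _ ?_
  · rintro _ ⟨S, hS, hSΩ, -, u, hu, rfl⟩
    have hd := hDpos u hu
    refine ⟨?_, div_nonneg (integral_nonneg fun x => sq_nonneg _) hd.le, ?_⟩
    · have := poincare (by omega) u hu.1 hu.2.1 (r ^ 2) fun x hx => by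
        have := hr (hu.2.2.1 hx)
        rw [mem_closedBall_zero_iff] at this
        gcongr
      rw [div_le_div_iff₀ (by positivity) hd, hD u hu, hI u hu]
      linarith
    · rw [div_le_one hd]
      exact setIntegral_mono_set (hu2i u hu).integrableOn
        (Filter.Eventually.of_forall fun x => sq_nonneg _) hSΩ.eventuallyLE
  · obtain ⟨x0, hx0⟩ := hne
    have hΩfin : volume Ω ≠ ⊤ := hΩb.measure_lt_top.ne
    -- small ball
    obtain ⟨d, hd0, hdΩ, hdA⟩ : ∃ d > 0, Metric.closedBall x0 d ⊆ Ω ∧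
        volume.real (Metric.closedBall x0 d) ≤ volume.real Ω - A := by
      obtain ⟨d1, hd1, hd1Ω⟩ := Metric.nhds_basis_closedBall.mem_iff.1 (hΩo.mem_nhds hx0)
      have hlim : Filter.Tendsto (fun d : ℝ => d ^ n *
          volume.real (Metric.ball (0 : EuclideanSpace ℝ (Fin n)) 1)) (nhdsWithin 0 (Set.Ioi 0)) (nhds 0) := by
        have hcc : Continuous (fun d : ℝ => d ^ n *
          volume.real (Metric.ball (0 : EuclideanSpace ℝ (Fin n)) 1)) := by fun_prop
        have := (hcc.tendsto 0).mono_left (nhdsWithin_le_nhds (s := Set.Ioi 0))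
        simpa [show n ≠ 0 by omega] using this
      have hev := hlim.eventually (ge_mem_nhds (show 0 < volume.real Ω - A from sub_pos.2 hA1))
      have hev2 : ∀ᶠ d : ℝ in nhdsWithin 0 (Set.Ioi 0), d ∈ Set.Ioo 0 d1 := Ioo_mem_nhdsGT hd1
      obtain ⟨d, h1, h2⟩ := (hev.and hev2).exists
      refine ⟨d, h2.1, (Metric.closedBall_subset_closedBall h2.2.le).trans hd1Ω, ?_⟩
      simp only [Measure.real] at h1 ⊢
      rw [Measure.addHaar_closedBall _ _ h2.1.le, ENNReal.toReal_mul,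
        ENNReal.toReal_ofReal (pow_nonneg h2.1.le _)]
      simpa using h1
    obtain ⟨S, hS, hSM, hSA⟩ := exists_sub (by omega) (Ω \ Metric.closedBall x0 d)
      (hΩo.measurableSet.diff measurableSet_closedBall) (hΩb.subset Set.sdiff_subset) A hA0 (by
        rw [measureReal_sdiff' measurableSet_closedBall hΩfin measure_closedBall_lt_top.ne,
          Set.union_eq_self_of_subset_right hdΩ]
        linarith)
    obtain ⟨u, hu1, hu2, hu3, -, hu5⟩ := exists_contDiff_tsupport_subset (n := (⊤ : ℕ∞))
      (Metric.closedBall_mem_nhds x0 hd0)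
    have hu : TestFun Ω u := ⟨hu3, hu2, hu1.trans hdΩ, fun h => by simp [h] at hu5⟩
    refine ⟨_, ⟨S, hS, hSM.trans Set.sdiff_subset, hSA, u, hu, rfl⟩, ?_⟩
    have : ∫ x in S, u x ^ 2 = 0 := by
      refine setIntegral_eq_zero_of_forall_eq_zero fun x hx => ?_
      simp [image_eq_zero_of_notMem_tsupport fun h => (hSM hx).2 (hu1 h)]
    simp [this]
  · intro a
    unfold Lam
    congr 1
    ext y
    constructor
    · rintro ⟨S, h1, h2, h3, u, hu, rfl⟩
      exact ⟨_, ⟨S, h1, h2, h3, u, hu, rfl⟩, by simp only; ring⟩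
    · rintro ⟨_, ⟨S, h1, h2, h3, u, hu, rfl⟩, rfl⟩
      exact ⟨S, h1, h2, h3, u, hu, by simp only; ring⟩
end
end

section
/- For every A ∈ [0, |Ω|), the function α ↦ Λ(α,A) − α is strictly decreasing on (0,∞). -/
open MeasureTheory ENNReal

noncomputable section

/-- A bounded measurable set has measurable subsets of every smaller volume. -/
theorem exists_sub_vol {n : ℕ} (hn : 2 ≤ n) (B : Set (EuclideanSpace ℝ (Fin n)))
    (hB : MeasurableSet B) (hb : Bornology.IsBounded B) (c : ℝ) (h0 : 0 ≤ c)
    (h1 : c ≤ volume.real B) :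
    ∃ T ⊆ B, MeasurableSet T ∧ volume.real T = c := by
  have : Nonempty (Fin n) := ⟨⟨0, by omega⟩⟩
  have hfin : volume B ≠ ∞ := hb.measure_lt_top.ne
  have : IsFiniteMeasure (volume.restrict B) := ⟨by simpa using hb.measure_lt_top⟩
  obtain ⟨R, hR⟩ := hb.subset_closedBall 0
  let F : ℝ → ℝ := fun r =>
    ∫ x in B, (Metric.closedBall (0 : EuclideanSpace ℝ (Fin n)) r).indicator (fun _ => (1 : ℝ)) x
  have hF : ∀ r, F r = volume.real (B ∩ Metric.closedBall 0 r) := by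
    intro r
    simp only [F]
    rw [integral_indicator Metric.isClosed_closedBall.measurableSet]
    rw [Measure.restrict_restrict Metric.isClosed_closedBall.measurableSet]
    simp [Set.inter_comm]
  have hcont : Continuous F := by
    rw [continuous_iff_continuousAt]
    intro r
    refine continuousAt_of_dominated (bound := fun _ => 1) ?_ ?_ (integrable_const _) ?_
    · refine Filter.Eventually.of_forall fun s => ?_
      exact (measurable_const.indicator
        Metric.isClosed_closedBall.measurableSet).aestronglyMeasurable
    · refine Filter.Eventually.of_forall fun s => Filter.Eventually.of_forall fun x => ?_
      by_cases hx : x ∈ Metric.closedBall (0 : EuclideanSpace ℝ (Fin n)) s <;> simp [Set.indicator, hx]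
    · have hs : ∀ᵐ x ∂(volume : Measure (EuclideanSpace ℝ (Fin n))), x ∉ Metric.sphere 0 r :=
        measure_eq_zero_iff_ae_notMem.1 (Measure.addHaar_sphere _ _ _)
      filter_upwards [ae_restrict_of_ae hs] with x hx
      have hx' : ‖x‖ ≠ r := by simpa using hx
      rcases lt_or_gt_of_ne hx' with h | h
      · have : (fun s => (Metric.closedBall (0 : EuclideanSpace ℝ (Fin n)) s).indicator
            (fun _ => (1 : ℝ)) x) =ᶠ[nhds r] fun _ => 1 := by
          filter_upwards [lt_mem_nhds h] with s hs
          simp [Set.indicator, hs.le]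
        exact continuousAt_const.congr this.symm
      · have : (fun s => (Metric.closedBall (0 : EuclideanSpace ℝ (Fin n)) s).indicator
            (fun _ => (1 : ℝ)) x) =ᶠ[nhds r] fun _ => 0 := by
          filter_upwards [gt_mem_nhds h] with s hs
          simp [Set.indicator, hs]
        exact continuousAt_const.congr this.symm
  have hlow : F (-1) = 0 := by
    rw [hF]; simp
  have hhigh : F R = volume.real B := by
    rw [hF, Set.inter_eq_left.2 hR]
  obtain ⟨r, hr⟩ := mem_range_of_exists_le_of_exists_ge (c := c) hcont ⟨-1, hlow.le.trans h0⟩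
    ⟨R, h1.trans hhigh.ge⟩
  exact ⟨B ∩ Metric.closedBall 0 r, Set.inter_subset_left,
    hB.inter Metric.isClosed_closedBall.measurableSet, by rw [← hF, hr]⟩

/-- Pigeonhole: a set of volume at most `(m+1) c` has a subset of volume at most `c` carrying
at least the fraction `1/(m+1)` of the integral. -/
theorem pigeon {n : ℕ} (hn : 2 ≤ n) (g : EuclideanSpace ℝ (Fin n) → ℝ)
    (hgi : Integrable g) (c : ℝ) (hc : 0 ≤ c) (m : ℕ) :
    ∀ B : Set (EuclideanSpace ℝ (Fin n)), MeasurableSet B → Bornology.IsBounded B →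
      volume.real B ≤ (m + 1) * c →
      ∃ T ⊆ B, MeasurableSet T ∧ volume.real T ≤ c ∧
        ∫ x in B, g x ≤ (m + 1) * ∫ x in T, g x := by
  induction m with
  | zero =>
    intro B hB hb hv
    exact ⟨B, subset_rfl, hB, by simpa using hv, by simp⟩
  | succ m ih =>
    intro B hB hb hv
    by_cases hcB : c ≤ volume.real B
    · obtain ⟨T, hTB, hT, hTc⟩ := exists_sub_vol hn B hB hb c hc hcB
      have hd : volume.real (B \ T) = volume.real B - c := by
        rw [measureReal_sdiff hTB hT hb.measure_lt_top.ne, hTc]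
      have hI : ∫ x in B \ T, g x = (∫ x in B, g x) - ∫ x in T, g x :=
        setIntegral_sdiff hT hgi.integrableOn hTB
      by_cases hbig : ∫ x in B, g x ≤ (((m + 1 : ℕ) : ℝ) + 1) * ∫ x in T, g x
      · exact ⟨T, hTB, hT, hTc.le, hbig⟩
      · obtain ⟨T', h1, h2, h3, h4⟩ := ih (B \ T) (hB.diff hT) (hb.subset Set.sdiff_subset)
          (by rw [hd]; push_cast at hv; linarith)
        refine ⟨T', h1.trans Set.sdiff_subset, h2, h3, ?_⟩
        rw [hI] at h4
        push_cast at hbig ⊢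
        push Not at hbig
        have hm : (0 : ℝ) < (m : ℝ) + 1 := by positivity
        have : (∫ x in T, g x) ≤ ∫ x in T', g x := by
          by_contra hlt
          push Not at hlt
          nlinarith
        linarith
    · obtain ⟨T, h1, h2, h3, h4⟩ := ih ∅ MeasurableSet.empty Bornology.isBounded_empty
          (by simp; positivity)
      by_cases hpos : 0 ≤ ∫ x in B, g x
      · refine ⟨B, subset_rfl, hB, (not_le.1 hcB).le, ?_⟩
        push_cast
        nlinarith [mul_nonneg (by positivity : (0 : ℝ) ≤ (m : ℝ) + 1) hpos]
      · refine ⟨∅, Set.empty_subset _, MeasurableSet.empty, by simpa using hc, ?_⟩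
        simpa using (not_le.1 hpos).le

/-- A uniform improvement: some admissible set misses a fixed fraction of the mass. -/
theorem exists_good {n : ℕ} (hn : 2 ≤ n) (Ω : Set (EuclideanSpace ℝ (Fin n)))
    (hΩo : IsOpen Ω) (hΩb : Bornology.IsBounded Ω)
    (A : ℝ) (hA0 : 0 ≤ A) (hA1 : A < (volume Ω).toReal) :
    ∃ δ : ℝ, 0 < δ ∧ ∀ g : EuclideanSpace ℝ (Fin n) → ℝ, Integrable g → (∀ x, 0 ≤ g x) →
      ∃ S ⊆ Ω, MeasurableSet S ∧ volume S = ENNReal.ofReal A ∧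
        ∫ x in S, g x ≤ (1 - δ) * ∫ x in Ω, g x := by
  have hA1' : A < volume.real Ω := hA1
  have hc : 0 < volume.real Ω - A := by linarith
  obtain ⟨m, hm⟩ := exists_nat_gt (volume.real Ω / (volume.real Ω - A))
  rw [div_lt_iff₀ hc] at hm
  refine ⟨1 / ((m : ℝ) + 1), by positivity, fun g hg h0 => ?_⟩
  obtain ⟨T, h1, h2, h3, h4⟩ := pigeon hn g hg _ hc.le m Ω hΩo.measurableSet hΩb (by linarith)
  have hd : volume.real (Ω \ T) = volume.real Ω - volume.real T :=
    measureReal_sdiff h1 h2 hΩb.measure_lt_top.ne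
  have hI : ∫ x in Ω \ T, g x = (∫ x in Ω, g x) - ∫ x in T, g x :=
    setIntegral_sdiff h2 hg.integrableOn h1
  obtain ⟨S, hS, hSm, hSA⟩ := exists_sub_vol hn (Ω \ T) (hΩo.measurableSet.diff h2)
    (hΩb.subset Set.sdiff_subset) A hA0 (by linarith)
  refine ⟨S, hS.trans Set.sdiff_subset, hSm, ?_, ?_⟩
  · have hfin : volume S ≠ ∞ := (hΩb.subset (hS.trans Set.sdiff_subset)).measure_lt_top.ne
    rw [← hSA, ofReal_measureReal hfin]
  · have hle : ∫ x in S, g x ≤ ∫ x in Ω \ T, g x :=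
      setIntegral_mono_set hg.integrableOn (Filter.Eventually.of_forall h0) hS.eventuallyLE
    have hm1 : (0 : ℝ) < (m : ℝ) + 1 := by positivity
    have : 1 / ((m : ℝ) + 1) * ∫ x in Ω, g x ≤ ∫ x in T, g x := by
      rw [one_div, inv_mul_le_iff₀ hm1]; exact h4
    rw [hI] at hle
    linarith

/-- For every `A ∈ [0,|Ω|)`, the map `α ↦ Λ(α,A) − α` is strictly decreasing on `(0,∞)`. -/
theorem statement7 {n : ℕ} (hn : 2 ≤ n) (Ω : Set (EuclideanSpace ℝ (Fin n)))
    (hne : Ω.Nonempty) (hΩo : IsOpen Ω) (hΩb : Bornology.IsBounded Ω)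
    (A : ℝ) (hA0 : 0 ≤ A) (hA1 : A < (volume Ω).toReal) :
    StrictAntiOn (fun α => Lam Ω α A - α) (Set.Ioi (0 : ℝ)) := by
  intro α hα β hβ hαβ
  simp only [Set.mem_Ioi] at hα hβ
  obtain ⟨δ, hδ, hgood⟩ := exists_good hn Ω hΩo hΩb A hA0 hA1
  have hpos : ∀ u, TestFun Ω u → Integrable (fun x => u x ^ 2) ∧ 0 < ∫ x in Ω, u x ^ 2 := by
    rintro u ⟨hu, hcs, hsub, hne0⟩
    have hc2 : Continuous (fun x => u x ^ 2) := hu.continuous.pow 2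
    have hcs2 : HasCompactSupport (fun x => u x ^ 2) :=
      hcs.comp_left (g := fun t : ℝ => t ^ 2) (by simp)
    refine ⟨hc2.integrable_of_hasCompactSupport hcs2, ?_⟩
    rw [setIntegral_eq_integral_of_forall_compl_eq_zero]
    · obtain ⟨x, hx⟩ := Function.ne_iff.1 hne0
      exact hc2.integral_pos_of_hasCompactSupport_nonneg_nonzero hcs2 (fun x => sq_nonneg _)
        (x := x) (pow_ne_zero 2 hx)
    · intro x hx
      have : u x = 0 := image_eq_zero_of_notMem_tsupport fun h => hx (hsub h)
      simp [this]
  show Lam Ω β A - β < Lam Ω α A - α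
  by_cases hex : ∃ u, TestFun Ω u
  · suffices h : Lam Ω β A - (β - α) * (1 - δ) ≤ Lam Ω α A by
      nlinarith [mul_pos (sub_pos.2 hαβ) hδ]
    conv_rhs => unfold Lam
    apply le_csInf
    · obtain ⟨u, hu⟩ := hex
      obtain ⟨S, hS, hSm, hSA, -⟩ := hgood _ (hpos u hu).1 (fun x => sq_nonneg _)
      exact ⟨_, S, hSm, hS, hSA, u, hu, rfl⟩
    · rintro r ⟨S, hSm, hS, hSA, u, hu, rfl⟩
      obtain ⟨hui, hup⟩ := hpos u hu
      have key : ∃ S' : Set (EuclideanSpace ℝ (Fin n)), MeasurableSet S' ∧ S' ⊆ Ω ∧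
          volume S' = ENNReal.ofReal A ∧ ∫ x in S', u x ^ 2 ≤ ∫ x in S, u x ^ 2 ∧
          ∫ x in S', u x ^ 2 ≤ (1 - δ) * ∫ x in Ω, u x ^ 2 := by
        obtain ⟨S', h1, h2, h3, h4⟩ := hgood _ hui (fun x => sq_nonneg _)
        rcases le_total (∫ x in S', u x ^ 2) (∫ x in S, u x ^ 2) with h | h
        · exact ⟨S', h2, h1, h3, h, h4⟩
        · exact ⟨S, hSm, hS, hSA, le_rfl, h.trans h4⟩
      obtain ⟨S', h2, h1, h3, h4, h5⟩ := key
      have hle : Lam Ω β A ≤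
          ((∫ x in Ω, lap u x ^ 2) + β * ∫ x in S', u x ^ 2) / ∫ x in Ω, u x ^ 2 := by
        refine csInf_le ⟨0, ?_⟩ ⟨S', h2, h1, h3, u, hu, rfl⟩
        rintro r ⟨S, -, -, -, v, -, rfl⟩
        have i1 : 0 ≤ ∫ x in Ω, lap v x ^ 2 := integral_nonneg fun x => sq_nonneg _
        have i2 : 0 ≤ ∫ x in S, v x ^ 2 := integral_nonneg fun x => sq_nonneg _
        have i3 : 0 ≤ ∫ x in Ω, v x ^ 2 := integral_nonneg fun x => sq_nonneg _
        positivity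
      rw [sub_le_iff_le_add]
      refine hle.trans ?_
      rw [div_add' _ _ _ hup.ne']
      refine div_le_div_of_nonneg_right ?_ hup.le
      nlinarith [mul_le_mul_of_nonneg_left h4 hα.le,
        mul_le_mul_of_nonneg_left h5 (sub_pos.2 hαβ).le]
  · have hz : ∀ γ, Lam Ω γ A = 0 := by
      intro γ
      unfold Lam
      convert Real.sInf_empty
      ext r
      simp only [Set.mem_ofPred_eq, Set.mem_empty_iff_false, iff_false]
      rintro ⟨S, -, -, -, u, hu, -⟩
      exact hex ⟨u, hu⟩
    rw [hz, hz]
    linarith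
end
end

section
/- Let 𝓗 ⊆ ℝⁿ be a closed half-space and let f : ℝⁿ → ℝ be measurable and non-negative. Then for every s > 0, the super-level sets of f and of its polarization f_𝓗 have the same Lebesgue measure: |{x ∈ ℝⁿ : f(x) > s}| = |{x ∈ ℝⁿ : f_𝓗(x) > s}|. -/
open MeasureTheory ENNReal RealInnerProductSpace

noncomputable section

/-- Reflection of `x` across the hyperplane `{y : ⟪y,e⟫ = c}` (the boundary of the closed
half-space `𝓗 = {y : ⟪y,e⟫ ≤ c}`, for a unit vector `e`). -/
def reflH {n : ℕ} (e : EuclideanSpace ℝ (Fin n)) (c : ℝ) (x : EuclideanSpace ℝ (Fin n)) :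
    EuclideanSpace ℝ (Fin n) :=
  x - (2 * (⟪x, e⟫ - c)) • e

/-- Polarization of `v : ℝⁿ → ℝ` relative to the closed half-space `𝓗 = {y : ⟪y,e⟫ ≤ c}`:
`v_𝓗(x) = max{v(x), v(x̄)}` for `x ∈ 𝓗` and `v_𝓗(x) = min{v(x), v(x̄)}` for `x ∉ 𝓗`. -/
def polarize {n : ℕ} (e : EuclideanSpace ℝ (Fin n)) (c : ℝ)
    (v : EuclideanSpace ℝ (Fin n) → ℝ) (x : EuclideanSpace ℝ (Fin n)) : ℝ :=
  if ⟪x, e⟫ ≤ c then max (v x) (v (reflH e c x)) else min (v x) (v (reflH e c x))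

theorem reflH_inner {n : ℕ} (e : EuclideanSpace ℝ (Fin n)) (he : ‖e‖ = 1) (c : ℝ)
    (x : EuclideanSpace ℝ (Fin n)) : ⟪reflH e c x, e⟫ = 2 * c - ⟪x, e⟫ := by
  unfold reflH
  rw [inner_sub_left, real_inner_smul_left, real_inner_self_eq_norm_sq, he]
  ring

theorem reflH_reflH {n : ℕ} (e : EuclideanSpace ℝ (Fin n)) (he : ‖e‖ = 1) (c : ℝ)
    (x : EuclideanSpace ℝ (Fin n)) : reflH e c (reflH e c x) = x := by
  rw [reflH, reflH_inner e he c x, reflH]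
  module

theorem reflH_mp {n : ℕ} (e : EuclideanSpace ℝ (Fin n)) (he : ‖e‖ = 1) (c : ℝ) :
    MeasurePreserving (reflH e c) volume volume := by
  have h1 := (Submodule.reflection (ℝ ∙ e)ᗮ).measurePreserving
  have h2 := (measurePreserving_add_right volume ((2 * c) • e)).comp h1
  suffices h3 : reflH e c = (fun x => x + (2 * c) • e) ∘ (Submodule.reflection (ℝ ∙ e)ᗮ) by
    rw [h3]
    exact h2
  funext x
  simp only [Function.comp, reflH, Submodule.reflection_orthogonal_apply,
    Submodule.reflection_singleton_apply, he, real_inner_comm x e]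
  simp
  module

/-- Polarization preserves the measure of super-level sets: for measurable non-negative `f`
and every `s > 0`, `|{f > s}| = |{f_𝓗 > s}|`. -/
theorem statement10 {n : ℕ} (e : EuclideanSpace ℝ (Fin n)) (he : ‖e‖ = 1) (c : ℝ)
    (f : EuclideanSpace ℝ (Fin n) → ℝ) (hf : Measurable f) (hf0 : ∀ x, 0 ≤ f x)
    (s : ℝ) (hs : 0 < s) :
    volume {x | s < f x} = volume {x | s < polarize e c f x} := by
  have hr := reflH_mp e he c
  have hinner : Measurable fun x : EuclideanSpace ℝ (Fin n) => ⟪x, e⟫ := by fun_prop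
  have hA : MeasurableSet {x | s < f x} := measurableSet_lt measurable_const hf
  have hE : MeasurableSet {x | c < ⟪x, e⟫ ∧ s < f x ∧ ¬ s < f (reflH e c x)} :=
    (measurableSet_lt measurable_const hinner).inter (hA.inter (hr.measurable hA).compl)
  set E := {x | c < ⟪x, e⟫ ∧ s < f x ∧ ¬ s < f (reflH e c x)} with hEdef
  have hB : {x | s < polarize e c f x} = ({x | s < f x} \ E) ∪ reflH e c ⁻¹' E := by
    ext x
    have hi := reflH_inner e he c x
    have hii := reflH_reflH e he c x
    have hb : ⟪x, e⟫ = c → reflH e c x = x := by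
      intro h
      simp [reflH, h]
    simp only [hEdef, polarize, Set.mem_setOf_eq, Set.mem_union, Set.mem_diff, Set.mem_preimage,
      hi, hii]
    by_cases hx : ⟪x, e⟫ ≤ c
    · rw [if_pos hx, lt_max_iff]
      rcases hx.lt_or_eq with h | h
      · have h1 : c < 2 * c - ⟪x, e⟫ := by linarith
        have h2 : ¬ c < ⟪x, e⟫ := by linarith
        tauto
      · rw [hb h]
        have h2 : ¬ c < ⟪x, e⟫ := by linarith
        tauto
    · rw [if_neg hx, lt_min_iff]
      have h1 : ¬ c < 2 * c - ⟪x, e⟫ := by linarith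
      have h2 : c < ⟪x, e⟫ := by linarith
      tauto
  have hd : Disjoint ({x | s < f x} \ E) (reflH e c ⁻¹' E) := by
    rw [Set.disjoint_left]
    rintro x ⟨hx, -⟩ ⟨-, -, h⟩
    rw [reflH_reflH e he c x] at h
    exact h hx
  have hsub : E ⊆ {x | s < f x} := fun x hx => hx.2.1
  rw [hB, measure_union hd (hr.measurable hE), hr.measure_preimage hE.nullMeasurableSet,
    add_comm, ← measure_union Set.disjoint_sdiff_right (hA.diff hE),
    Set.union_diff_cancel hsub]
end
end

section
/- Let 0 ≤ h < H, t ≥ 0, let u : ℝⁿ → ℝ be non-negative, and let 𝓗 ⊆ ℝⁿ be a closed half-space. Then the polarization of the product ρ_u · u equals the product of the density associated to the polarization with the polarization: [ρ_u u]_𝓗(x) = ρ_{u_𝓗}(x) · u_𝓗(x) for every x ∈ ℝⁿ. -/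
open MeasureTheory ENNReal RealInnerProductSpace

noncomputable section

/-- The two-valued density associated to `v`: `ρ_v(x) = h` if `v(x) ≤ √t`, `ρ_v(x) = H`
if `v(x) > √t`. -/
def rhoD {n : ℕ} (h H t : ℝ) (v : EuclideanSpace ℝ (Fin n) → ℝ)
    (x : EuclideanSpace ℝ (Fin n)) : ℝ :=
  if v x ≤ Real.sqrt t then h else H

theorem mono_aux (h H s a b : ℝ) (hh : 0 ≤ h) (hH : h < H) (ha : 0 ≤ a) (hab : a ≤ b) :
    (if a ≤ s then h else H) * a ≤ (if b ≤ s then h else H) * b := by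
  have hb : 0 ≤ b := ha.trans hab
  split_ifs with h1 h2 h2
  · exact mul_le_mul_of_nonneg_left hab hh
  · exact mul_le_mul hH.le hab ha (hh.trans hH.le)
  · exact absurd (hab.trans h2) h1
  · exact mul_le_mul_of_nonneg_left hab (hh.trans hH.le)

/-- The polarization of the product `ρ_u·u` equals `ρ_{u_𝓗}·u_𝓗`:
`[ρ_u u]_𝓗(x) = ρ_{u_𝓗}(x)·u_𝓗(x)` for every `x ∈ ℝⁿ`. -/
theorem statement11 {n : ℕ} (h H t : ℝ) (hh : 0 ≤ h) (hH : h < H) (ht : 0 ≤ t)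
    (u : EuclideanSpace ℝ (Fin n) → ℝ) (hu : ∀ x, 0 ≤ u x)
    (e : EuclideanSpace ℝ (Fin n)) (he : ‖e‖ = 1) (c : ℝ) (x : EuclideanSpace ℝ (Fin n)) :
    polarize e c (fun y => rhoD h H t u y * u y) x
      = rhoD h H t (polarize e c u) x * polarize e c u x := by
  unfold polarize rhoD
  by_cases hx : ⟪x, e⟫ ≤ c
  · simp only [hx, if_true]
    rcases le_total (u x) (u (reflH e c x)) with hab | hab
    · rw [max_eq_right hab, max_eq_right (mono_aux h H _ _ _ hh hH (hu _) hab)]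
    · rw [max_eq_left hab, max_eq_left (mono_aux h H _ _ _ hh hH (hu _) hab)]
  · simp only [hx, if_false]
    rcases le_total (u x) (u (reflH e c x)) with hab | hab
    · rw [min_eq_left hab, min_eq_left (mono_aux h H _ _ _ hh hH (hu _) hab)]
    · rw [min_eq_right hab, min_eq_right (mono_aux h H _ _ _ hh hH (hu _) hab)]
end
end

section
/- Let 0 < h < H, t ≥ 0, let u : ℝⁿ → ℝ be non-negative, and let 𝓗 ⊆ ℝⁿ be a closed half-space. If ρ_u(x) u(x) = [ρ_u u]_𝓗(x) for every x ∈ ℝⁿ, then u(x) = u_𝓗(x) for every x ∈ ℝⁿ. -/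
open MeasureTheory ENNReal RealInnerProductSpace

noncomputable section

/-- The map `a ↦ ρ(a) a` is strictly increasing on `[0, ∞)`, hence reflects the order. -/
theorem le_of_rho_mul_le (h H s a b : ℝ) (hh : 0 < h) (hH : h < H) (hb : 0 ≤ b)
    (hab : (if a ≤ s then h else H) * a ≤ (if b ≤ s then h else H) * b) : a ≤ b := by
  by_contra hlt
  push Not at hlt
  split_ifs at hab <;> nlinarith

/-- If `0 < h < H` and `ρ_u u = [ρ_u u]_𝓗` everywhere, then `u = u_𝓗` everywhere. -/
theorem statement12 {n : ℕ} (h H t : ℝ) (hh : 0 < h) (hH : h < H) (ht : 0 ≤ t)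
    (u : EuclideanSpace ℝ (Fin n) → ℝ) (hu : ∀ x, 0 ≤ u x)
    (e : EuclideanSpace ℝ (Fin n)) (he : ‖e‖ = 1) (c : ℝ)
    (hyp : ∀ x, rhoD h H t u x * u x = polarize e c (fun y => rhoD h H t u y * u y) x) :
    ∀ x, u x = polarize e c u x := by
  intro x
  have hx := hyp x
  have key : ∀ y z, rhoD h H t u y * u y ≤ rhoD h H t u z * u z → u y ≤ u z :=
    fun y z hyz => le_of_rho_mul_le h H (Real.sqrt t) (u y) (u z) hh hH (hu z) hyz
  unfold polarize at hx ⊢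
  split_ifs at hx ⊢ with hc
  · exact (max_eq_left (key _ _ (max_eq_left_iff.mp hx.symm))).symm
  · exact (min_eq_left (key _ _ (min_eq_left_iff.mp hx.symm))).symm
end
end

section
/- Let v : ℝⁿ → ℝ be continuous with compact support. Then v is radial and radially non-increasing (i.e. there exists a non-increasing function φ : [0,∞) → ℝ with v(x) = φ(|x|) for every x ∈ ℝⁿ) if and only if v = v_𝓗 for every closed half-space 𝓗 ⊆ ℝⁿ with 0 in the interior of 𝓗. -/
open MeasureTheory ENNReal RealInnerProductSpace

noncomputable section

theorem norm_reflH_sq {n : ℕ} (e : EuclideanSpace ℝ (Fin n)) (c : ℝ) (he : ‖e‖ = 1)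
    (x : EuclideanSpace ℝ (Fin n)) :
    ‖reflH e c x‖ ^ 2 = ‖x‖ ^ 2 - 4 * c * (⟪x, e⟫ - c) := by
  unfold reflH
  rw [norm_sub_sq_real, inner_smul_right, norm_smul, he, mul_one, Real.norm_eq_abs, sq_abs]
  ring

theorem le_of_norm_lt_of_polarize {n : ℕ} (v : EuclideanSpace ℝ (Fin n) → ℝ)
    (h : ∀ (e : EuclideanSpace ℝ (Fin n)) (c : ℝ), ‖e‖ = 1 → 0 < c → polarize e c v = v)
    (x y : EuclideanSpace ℝ (Fin n)) (hxy : ‖x‖ < ‖y‖) : v y ≤ v x := by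
  have hne : y - x ≠ 0 := by
    intro h0
    rw [sub_eq_zero] at h0
    rw [h0] at hxy
    exact lt_irrefl _ hxy
  have hd : 0 < ‖y - x‖ := norm_pos_iff.mpr hne
  set d := ‖y - x‖ with hdd
  have hd2 : d ^ 2 = ‖y‖ ^ 2 - 2 * ⟪x, y⟫ + ‖x‖ ^ 2 := by
    rw [hdd, norm_sub_sq_real, real_inner_comm]
  have hin : ⟪x, d⁻¹ • (y - x)⟫ = d⁻¹ * (⟪x, y⟫ - ‖x‖ ^ 2) := by
    rw [inner_smul_right, inner_sub_right, real_inner_self_eq_norm_sq]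
  have he : ‖d⁻¹ • (y - x)‖ = 1 := by
    rw [norm_smul, ← hdd, norm_inv, Real.norm_of_nonneg hd.le, inv_mul_cancel₀ hd.ne']
  have hc : 0 < d⁻¹ * ((‖y‖ ^ 2 - ‖x‖ ^ 2) / 2) := by
    have : ‖x‖ ^ 2 < ‖y‖ ^ 2 := by gcongr
    have : 0 < ‖y‖ ^ 2 - ‖x‖ ^ 2 := by linarith
    positivity
  have hdiff : ⟪x, d⁻¹ • (y - x)⟫ - d⁻¹ * ((‖y‖ ^ 2 - ‖x‖ ^ 2) / 2) = - d / 2 := by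
    rw [hin]
    have : ⟪x, y⟫ = (‖y‖ ^ 2 + ‖x‖ ^ 2 - d ^ 2) / 2 := by linarith
    rw [this]
    field_simp
    ring
  have hp := congrFun (h _ _ he hc) x
  have hr : reflH (d⁻¹ • (y - x)) (d⁻¹ * ((‖y‖ ^ 2 - ‖x‖ ^ 2) / 2)) x = y := by
    unfold reflH
    rw [hdiff, smul_smul]
    have : 2 * (-d / 2) * d⁻¹ = -1 := by field_simp
    rw [this]
    simp
  unfold polarize at hp
  rw [if_pos (by linarith), hr] at hp
  rw [← hp]
  exact le_max_right _ _

theorem le_of_norm_le_of_polarize {n : ℕ} (v : EuclideanSpace ℝ (Fin n) → ℝ)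
    (hv : Continuous v)
    (h : ∀ (e : EuclideanSpace ℝ (Fin n)) (c : ℝ), ‖e‖ = 1 → 0 < c → polarize e c v = v)
    (x y : EuclideanSpace ℝ (Fin n)) (hxy : ‖x‖ ≤ ‖y‖) : v y ≤ v x := by
  by_cases hy : y = 0
  · subst hy
    have : x = 0 := by simpa using hxy
    rw [this]
  have hy' : 0 < ‖y‖ := norm_pos_iff.mpr hy
  have hcont : Continuous (fun t : ℝ => v ((1 + t) • y)) := by fun_prop
  have ht : Filter.Tendsto (fun t : ℝ => v ((1 + t) • y)) (nhdsWithin 0 (Set.Ioi 0))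
      (nhds (v y)) := by
    have := (hcont.tendsto 0).mono_left (nhdsWithin_le_nhds (s := Set.Ioi 0))
    simpa using this
  refine le_of_tendsto ht ?_
  filter_upwards [self_mem_nhdsWithin] with t htpos
  have htp : (0 : ℝ) < t := htpos
  apply le_of_norm_lt_of_polarize v h
  rw [norm_smul, Real.norm_of_nonneg (by linarith)]
  nlinarith

/-- A continuous compactly supported `v : ℝⁿ → ℝ` is radial and radially non-increasing
if and only if `v = v_𝓗` for every closed half-space `𝓗` with `0` in its interior. -/
theorem statement16 {n : ℕ} (v : EuclideanSpace ℝ (Fin n) → ℝ)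
    (hv : Continuous v) (hsupp : HasCompactSupport v) :
    (∃ φ : ℝ → ℝ, AntitoneOn φ (Set.Ici 0) ∧ ∀ x, v x = φ ‖x‖) ↔
    (∀ (e : EuclideanSpace ℝ (Fin n)) (c : ℝ), ‖e‖ = 1 → 0 < c →
      polarize e c v = v) := by
  constructor
  · rintro ⟨φ, hφ, hvφ⟩ e c he hc
    funext x
    have hsq := norm_reflH_sq e c he x
    unfold polarize
    split_ifs with hx
    · apply max_eq_left
      rw [hvφ, hvφ]
      apply hφ (norm_nonneg _) (norm_nonneg _)
      refine (sq_le_sq₀ (norm_nonneg _) (norm_nonneg _)).mp ?_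
      nlinarith
    · apply min_eq_left
      rw [hvφ, hvφ]
      apply hφ (norm_nonneg _) (norm_nonneg _)
      refine (sq_le_sq₀ (norm_nonneg _) (norm_nonneg _)).mp ?_
      push Not at hx
      nlinarith
  · intro h
    have key := le_of_norm_le_of_polarize v hv h
    rcases subsingleton_or_nontrivial (EuclideanSpace ℝ (Fin n)) with hs | hs
    · exact ⟨fun _ => v 0, fun _ _ _ _ _ => le_rfl, fun x => by rw [Subsingleton.elim x 0]⟩
    · obtain ⟨e, he⟩ := exists_norm_eq (EuclideanSpace ℝ (Fin n)) (zero_le_one (α := ℝ))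
      have hn : ∀ r : ℝ, 0 ≤ r → ‖r • e‖ = r := fun r hr => by
        rw [norm_smul, he, mul_one, Real.norm_of_nonneg hr]
      refine ⟨fun r => v (r • e), ?_, fun x => ?_⟩
      · intro a ha b hb hab
        apply key
        rwa [hn a ha, hn b hb]
      · have := hn ‖x‖ (norm_nonneg x)
        exact le_antisymm (key _ _ this.le) (key _ _ this.ge)
end
end
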